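/- arXiv:2206.03465 — 10 statements merged into one kernel-verified Lean document; each statement's English description precedes it below -/
import Mathlib

section
/- Let F be a field, let G be a finitely generated group, let g ∈ G, and let ρ : G → GL_n(F) be a group homomorphism with ρ(g) ≠ I_n. Then there exist n' ∈ ℕ and a group homomorphism ρ' : G → GL_{n'}(F) such that for every x ∈ G the matrix ρ'(x) is either the identity matrix I_{n'} or the permutation matrix of a derangement of {1,…,n'}, and such that ρ'(g) ≠ I_{n'}. -/
/-- The permutation matrix of a permutation `σ` of `{1,…,n}`: the 0–1 matrix whose
`(i,j)` entry is `1` exactly when `i = σ j`. -/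
def permMatrix {n : ℕ} (R : Type*) [Zero R] [One R] (σ : Equiv.Perm (Fin n)) :
    Matrix (Fin n) (Fin n) R :=
  Matrix.of fun i j => if i = σ j then 1 else 0

theorem int_jac : IsJacobsonRing ℤ := by
  rw [isJacobsonRing_iff_sInf_maximal]
  intro P hP
  by_cases h : P = ⊥
  · refine ⟨{J | J.IsMaximal}, fun J hJ => Or.inl hJ, ?_⟩
    subst h
    symm
    rw [eq_bot_iff]
    intro x hx
    rw [Ideal.mem_sInf] at hx
    obtain ⟨p, hp, hpp⟩ := Nat.exists_infinite_primes (x.natAbs + 1)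
    have hpr : Prime (p : ℤ) := Nat.prime_iff_prime_int.mp hpp
    have hm : (Ideal.span {(p : ℤ)}).IsMaximal :=
      PrincipalIdealRing.isMaximal_of_irreducible hpr.irreducible
    have := hx hm
    rw [Ideal.mem_span_singleton] at this
    rw [Ideal.mem_bot]
    exact Int.eq_zero_of_dvd_of_natAbs_lt_natAbs this (by simp; omega)
  · refine ⟨{P}, ?_, by simp⟩
    intro J hJ
    rw [Set.mem_singleton_iff] at hJ
    subst hJ
    exact Or.inl (IsPrime.to_maximal_ideal h)

theorem finite_field_of_ft (K : Type*) [Field K] [inst : Algebra ℤ K] [Algebra.FiniteType ℤ K] : Finite K := by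
  obtain rfl : inst = Ring.toIntAlgebra K := Subsingleton.elim _ _
  have := int_jac
  have hfin : Module.Finite ℤ K := finite_of_finite_type_of_isJacobsonRing ℤ K
  have hni : ¬ Function.Injective (algebraMap ℤ K) := fun hi =>
    Int.not_isField (isField_of_isIntegral_of_isField hi (Field.toIsField K))
  rw [injective_iff_map_eq_zero] at hni
  push Not at hni
  obtain ⟨a, ha, ha0⟩ := hni
  apply Module.finite_of_fg_torsion
  intro x
  refine ⟨⟨a, mem_nonZeroDivisors_of_ne_zero ha0⟩, ?_⟩
  change a • x = 0
  rw [Algebra.smul_def, ha, zero_mul]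

theorem exists_finite_quot.{u} {F : Type u} [Field F] {G : Type*} [Group G] (hFG : Group.FG G)
    {n : ℕ} (g : G) (ρ : G →* Matrix.GeneralLinearGroup (Fin n) F)
    (hg : ρ g ≠ 1) :
    ∃ (H : Type u) (_ : Group H) (_ : Finite H) (φ : G →* H), φ g ≠ 1 := by
  obtain ⟨S, hS⟩ := Group.fg_def.mp hFG
  obtain ⟨i, j, hij⟩ : ∃ i j, (ρ g : Matrix (Fin n) (Fin n) F) i j ≠
      (1 : Matrix (Fin n) (Fin n) F) i j := by
    by_contra! h
    exact hg (Units.ext (Matrix.ext h))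
  set d : F := (ρ g : Matrix (Fin n) (Fin n) F) i j - (1 : Matrix (Fin n) (Fin n) F) i j with hd
  have hd0 : d ≠ 0 := sub_ne_zero.mpr hij
  let T : Set F := insert d⁻¹ (Set.range (fun q : S × Fin n × Fin n =>
      (ρ q.1 : Matrix (Fin n) (Fin n) F) q.2.1 q.2.2) ∪
    Set.range (fun q : S × Fin n × Fin n =>
      ((ρ q.1)⁻¹ : Matrix.GeneralLinearGroup (Fin n) F).val q.2.1 q.2.2))
  have hT : T.Finite := ((Set.finite_range _).union (Set.finite_range _)).insert _
  let A := Algebra.adjoin ℤ T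
  have hA : Algebra.FiniteType ℤ A := .adjoin_of_finite hT
  have hTA : T ⊆ A := Algebra.subset_adjoin
  let ι : A →+* F := A.val.toRingHom
  have hι : Function.Injective ι := Subtype.val_injective
  let Φ := Matrix.GeneralLinearGroup.map (n := Fin n) ι
  have hmat : Function.Injective (fun M : Matrix (Fin n) (Fin n) A => M.map ι) :=
    Matrix.map_injective hι
  have hΦ : Function.Injective Φ := by
    intro a b hab
    apply Units.ext
    apply hmat
    exact congrArg Units.val hab
  have hrange : ∀ x, ρ x ∈ Φ.range := by
    suffices h : (⊤ : Subgroup G) ≤ Φ.range.comap ρ from fun x => h (Subgroup.mem_top x)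
    rw [← hS, Subgroup.closure_le]
    intro s hs
    let M : Matrix (Fin n) (Fin n) A := Matrix.of fun a b =>
      ⟨(ρ s : Matrix (Fin n) (Fin n) F) a b, hTA (Or.inr (Or.inl ⟨(⟨s, hs⟩, a, b), rfl⟩))⟩
    let M' : Matrix (Fin n) (Fin n) A := Matrix.of fun a b =>
      ⟨((ρ s)⁻¹ : Matrix.GeneralLinearGroup (Fin n) F).val a b,
        hTA (Or.inr (Or.inr ⟨(⟨s, hs⟩, a, b), rfl⟩))⟩
    have hM : M.map ι = (ρ s).val := by ext; rfl
    have hM' : M'.map ι = ((ρ s)⁻¹ : Matrix.GeneralLinearGroup (Fin n) F).val := by ext; rfl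
    refine ⟨⟨M, M', hmat ?_, hmat ?_⟩, ?_⟩
    · change (M * M').map ι = (1 : Matrix (Fin n) (Fin n) A).map ι
      rw [Matrix.map_mul, hM, hM', Units.mul_inv, Matrix.map_one _ (map_zero _) (map_one _)]
    · change (M' * M).map ι = (1 : Matrix (Fin n) (Fin n) A).map ι
      rw [Matrix.map_mul, hM, hM', Units.inv_mul, Matrix.map_one _ (map_zero _) (map_one _)]
    · apply Units.ext
      exact hM
  let ψ : G →* Matrix.GeneralLinearGroup (Fin n) A :=
    (MonoidHom.ofInjective hΦ).symm.toMonoidHom.comp (ρ.codRestrict Φ.range hrange)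
  have hψ : ∀ x, Φ (ψ x) = ρ x := by
    intro x
    have := (MonoidHom.ofInjective hΦ).apply_symm_apply ((ρ.codRestrict Φ.range hrange) x)
    exact congrArg Subtype.val this
  obtain ⟨m, hm⟩ := Ideal.exists_maximal A
  let _ : Field (A ⧸ m) := Ideal.Quotient.field m
  have hft : Algebra.FiniteType ℤ (A ⧸ m) :=
    Algebra.FiniteType.of_surjective (Ideal.Quotient.mkₐ ℤ m) (Ideal.Quotient.mkₐ_surjective ℤ m)
  have hfin : Finite (A ⧸ m) := finite_field_of_ft (A ⧸ m)
  let Θ := Matrix.GeneralLinearGroup.map (n := Fin n) (Ideal.Quotient.mk m)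
  have hgg : Θ (ψ g) ≠ 1 := by
    intro h1
    have h2 : Ideal.Quotient.mk m ((ψ g).val i j) =
        (1 : Matrix (Fin n) (Fin n) (A ⧸ m)) i j :=
      congrArg (fun u : Matrix.GeneralLinearGroup (Fin n) (A ⧸ m) => u.val i j) h1
    have h3 : (1 : Matrix (Fin n) (Fin n) (A ⧸ m)) i j =
        Ideal.Quotient.mk m ((1 : Matrix (Fin n) (Fin n) A) i j) := by
      simp only [Matrix.one_apply]; split_ifs <;> simp
    rw [h3, Ideal.Quotient.eq] at h2
    have h4 : ι ((ψ g).val i j) = (ρ g).val i j :=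
      congrArg (fun u : Matrix.GeneralLinearGroup (Fin n) F => u.val i j) (hψ g)
    have h5 : ι ((1 : Matrix (Fin n) (Fin n) A) i j) = (1 : Matrix (Fin n) (Fin n) F) i j := by
      simp only [Matrix.one_apply]; split_ifs <;> simp
    let e : A := ⟨d⁻¹, hTA (Or.inl rfl)⟩
    have h6 : e * ((ψ g).val i j - (1 : Matrix (Fin n) (Fin n) A) i j) = 1 := by
      apply hι
      rw [map_mul, map_sub, h4, h5, map_one]
      exact inv_mul_cancel₀ hd0
    apply hm.ne_top
    rw [Ideal.eq_top_iff_one, ← h6]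
    exact m.mul_mem_left _ h2
  have : Finite (Matrix.GeneralLinearGroup (Fin n) (A ⧸ m)) :=
    Finite.of_injective Units.val Units.val_injective
  exact ⟨_, inferInstance, this, Θ.comp ψ, hgg⟩

theorem permMatrix_mul' {n : ℕ} (R : Type*) [Semiring R] (σ τ : Equiv.Perm (Fin n)) :
    permMatrix R (σ * τ) = permMatrix R σ * permMatrix R τ := by
  ext i j
  simp [permMatrix, Matrix.mul_apply]
  rfl

theorem permMatrix_one' {n : ℕ} (R : Type*) [Semiring R] :
    permMatrix R (1 : Equiv.Perm (Fin n)) = 1 := by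
  ext i j
  simp [permMatrix, Matrix.one_apply]
  rfl

/-- Let `F` be a field, `G` a finitely generated group, `g ∈ G`, and
`ρ : G → GL_n(F)` a group homomorphism with `ρ(g) ≠ 1`. Then there exist `n' ∈ ℕ` and a
homomorphism `ρ' : G → GL_{n'}(F)` such that every `ρ'(x)` is either the identity matrix
or the permutation matrix of a derangement, and `ρ'(g) ≠ 1`. -/
theorem statement0 {F : Type*} [Field F] {G : Type*} [Group G] (hFG : Group.FG G)
    {n : ℕ} (g : G) (ρ : G →* Matrix.GeneralLinearGroup (Fin n) F)
    (hg : ρ g ≠ 1) :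
    ∃ (n' : ℕ) (ρ' : G →* Matrix.GeneralLinearGroup (Fin n') F),
      (∀ x : G, ((ρ' x : Matrix (Fin n') (Fin n') F) = 1 ∨
        ∃ σ : Equiv.Perm (Fin n'), (∀ i, σ i ≠ i) ∧
          (ρ' x : Matrix (Fin n') (Fin n') F) = permMatrix F σ)) ∧
      ρ' g ≠ 1 := by
  obtain ⟨H, _, _, φ, hφ⟩ := exists_finite_quot hFG g ρ hg
  obtain ⟨k, ⟨e⟩⟩ := Finite.exists_equiv_fin H
  let P : Equiv.Perm (Fin k) →* Matrix (Fin k) (Fin k) F :=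
    { toFun := permMatrix F
      map_one' := permMatrix_one' F
      map_mul' := permMatrix_mul' F }
  let L : G →* Equiv.Perm (Fin k) :=
    (e.permCongrHom.toMonoidHom.comp (MulAction.toPermHom H H)).comp φ
  have hL : ∀ x i, L x i = e (φ x * e.symm i) := fun x i => rfl
  refine ⟨k, (P.comp L).toHomUnits, ?_, ?_⟩
  · intro x
    by_cases hx : φ x = 1
    · left
      have : L x = 1 := by
        ext i
        rw [hL, hx]; simp
      change P (L x) = 1
      rw [this, map_one]
    · right
      refine ⟨L x, ?_, rfl⟩
      intro i hi
      rw [hL, ← Equiv.eq_symm_apply] at hi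
      exact hx (mul_eq_right.mp hi)
  · intro h
    have h1 : permMatrix F (L g) = 1 := congrArg Units.val h
    apply hφ
    have h2 := congrFun (congrFun h1 (L g (e 1))) (e 1)
    by_contra hne
    have h3 : L g (e 1) ≠ e 1 := by
      rw [hL]; simpa using hne
    simp [permMatrix, h3] at h2
end

section
/- Let F be a field, let r, s ∈ ℕ and n ≥ 1, and let L = F(z_{k,i,j} : 1 ≤ k ≤ r, 1 ≤ i,j ≤ n) be the field of rational functions over F in r·n² independent variables. For each 1 ≤ k ≤ r let A_k ∈ M_n(L) be the generic matrix (z_{k,i,j})_{1≤i,j≤n}. Let w be an element of the free unital associative F-algebra on the 2r + 2s generators b_1,…,b_r, b̄_1,…,b̄_r, c_1,…,c_s, c̄_1,…,c̄_s (where b̄_k and c̄_j are generators formally unrelated to b_k and c_j), and fix invertible matrices C_1,…,C_s ∈ M_n(F), viewed inside M_n(L). For invertible X_1,…,X_r ∈ M_n(L), let w(X_1,…,X_r,C_1,…,C_s) ∈ M_n(L) denote the image of w under the F-algebra homomorphism sending b_k ↦ X_k, b̄_k ↦ X_k^{-1}, c_j ↦ C_j, c̄_j ↦ C_j^{-1}.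 If there exist invertible matrices B_1,…,B_r ∈ M_n(L) such that w(B_1,…,B_r,C_1,…,C_s) is invertible, then w(A_1,…,A_r,C_1,…,C_s) is invertible. -/
open scoped Matrix

/-- The `k`-th generic `n × n` matrix: its `(i,j)` entry is the image in `L` of the
variable `z_{k,i,j}` of the polynomial ring `F[z_{k,i,j}]`. -/
noncomputable def genericMatrix (F : Type*) [CommRing F] (r n : ℕ) (L : Type*) [CommRing L]
    [Algebra (MvPolynomial (Fin r × Fin n × Fin n) F) L] (k : Fin r) :
    Matrix (Fin n) (Fin n) L :=
  Matrix.of fun i j => algebraMap (MvPolynomial (Fin r × Fin n × Fin n) F) L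
    (MvPolynomial.X (k, i, j))

/-- Substitution of matrices for the generators of the free unital associative `F`-algebra on
`2r + 2s` generators `b_1,…,b_r, b̄_1,…,b̄_r, c_1,…,c_s, c̄_1,…,c̄_s`: the `F`-algebra
homomorphism sends `b_k ↦ X k`, `b̄_k ↦ (X k)⁻¹`, `c_j ↦ Y j`, `c̄_j ↦ (Y j)⁻¹`. -/
noncomputable def substWord {F : Type*} [Field F] {r s n : ℕ} {L : Type*} [Field L]
    [Algebra F L] (X : Fin r → Matrix (Fin n) (Fin n) L)
    (Y : Fin s → Matrix (Fin n) (Fin n) L)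
    (w : FreeAlgebra F ((Fin r ⊕ Fin r) ⊕ (Fin s ⊕ Fin s))) :
    Matrix (Fin n) (Fin n) L :=
  FreeAlgebra.lift F
    (Sum.elim (Sum.elim X fun k => (X k)⁻¹) (Sum.elim Y fun j => (Y j)⁻¹)) w

theorem substWord_map {F : Type*} [Field F] {r s n : ℕ} {S L : Type*} [CommRing S] [Field L]
    [Algebra F S] [Algebra F L] (f : S →ₐ[F] L)
    (G : Fin r → Matrix (Fin n) (Fin n) S) (hG : ∀ k, IsUnit (G k))
    (C : Fin s → Matrix (Fin n) (Fin n) F) (hC : ∀ j, IsUnit (C j))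
    (w : FreeAlgebra F ((Fin r ⊕ Fin r) ⊕ (Fin s ⊕ Fin s))) :
    substWord (fun k => (G k).map f) (fun j => (C j).map (algebraMap F L)) w =
      f.mapMatrix (FreeAlgebra.lift F
        (Sum.elim (Sum.elim G fun k => (G k)⁻¹)
          (Sum.elim (fun j => (C j).map (algebraMap F S))
            fun j => ((C j)⁻¹).map (algebraMap F S))) w) := by
  unfold substWord
  rw [← AlgHom.comp_apply]
  congr 1
  apply FreeAlgebra.hom_ext
  funext x
  rcases x with (k | k) | (j | j)
  · simp
  · simp only [Function.comp_apply, FreeAlgebra.lift_ι_apply, AlgHom.comp_apply, Sum.elim_inl,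
      Sum.elim_inr, AlgHom.mapMatrix_apply]
    apply Matrix.inv_eq_left_inv
    rw [← AlgHom.mapMatrix_apply, ← AlgHom.mapMatrix_apply, ← map_mul,
      Matrix.nonsing_inv_mul _ ((Matrix.isUnit_iff_isUnit_det _).1 (hG k)), map_one]
  · ext a b
    simp
  · simp only [Function.comp_apply, FreeAlgebra.lift_ι_apply, AlgHom.comp_apply,
      Sum.elim_inr, AlgHom.mapMatrix_apply]
    have : (((C j)⁻¹).map (algebraMap F S)).map f = (C j)⁻¹.map (algebraMap F L) := by
      ext a b
      simp
    rw [this]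
    apply Matrix.inv_eq_left_inv
    rw [← RingHom.mapMatrix_apply, ← RingHom.mapMatrix_apply, ← map_mul,
      Matrix.nonsing_inv_mul _ ((Matrix.isUnit_iff_isUnit_det _).1 (hC j)), map_one]

/-- Let `L = F(z_{k,i,j})` be the field of rational functions over `F` in
`r·n²` variables, `A_k` the generic matrices, and `C_1,…,C_s` invertible matrices over `F`,
viewed in `M_n(L)`. If some word `w` in the free algebra evaluates to an invertible matrix
when invertible matrices `B_1,…,B_r ∈ M_n(L)` are substituted for `b_1,…,b_r` (and their
inverses for `b̄_1,…,b̄_r`, and the `C_j`, `C_j⁻¹` for `c_j`, `c̄_j`), then it also evaluates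
to an invertible matrix when the generic matrices `A_k` are substituted. -/
theorem statement2 {F : Type*} [Field F] (r s n : ℕ) (hn : 1 ≤ n)
    (L : Type*) [Field L] [Algebra (MvPolynomial (Fin r × Fin n × Fin n) F) L]
    [IsFractionRing (MvPolynomial (Fin r × Fin n × Fin n) F) L]
    [Algebra F L] [IsScalarTower F (MvPolynomial (Fin r × Fin n × Fin n) F) L]
    (w : FreeAlgebra F ((Fin r ⊕ Fin r) ⊕ (Fin s ⊕ Fin s)))
    (C : Fin s → Matrix (Fin n) (Fin n) F) (hC : ∀ j, IsUnit (C j))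
    (B : Fin r → Matrix (Fin n) (Fin n) L) (hB : ∀ k, IsUnit (B k))
    (hw : IsUnit (substWord B (fun j => (C j).map (algebraMap F L)) w)) :
    IsUnit (substWord (genericMatrix F r n L) (fun j => (C j).map (algebraMap F L)) w) := by
  classical
  let R := MvPolynomial (Fin r × Fin n × Fin n) F
  let φ : R →ₐ[F] L := MvPolynomial.aeval fun p => B p.1 p.2.1 p.2.2
  let M : Submonoid R := (nonZeroDivisors L).comap φ
  have hM : ∀ m : M, φ m ≠ 0 := fun m => nonZeroDivisors.ne_zero m.2
  have hM' : ∀ m : M, algebraMap R L m ≠ 0 := fun m h => hM m (by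
    have : (m : R) = 0 := IsFractionRing.injective R L (by rw [h, map_zero])
    rw [this, map_zero])
  let S := Localization M
  let ψ : S →ₐ[F] L := IsLocalization.liftAlgHom (M := M) (f := φ)
    (fun m => (hM m).isUnit)
  let ι : S →ₐ[F] L := IsLocalization.liftAlgHom (M := M) (f := IsScalarTower.toAlgHom F R L)
    (fun m => (hM' m).isUnit)
  have hψ : ∀ x : R, ψ (algebraMap R S x) = φ x := fun x => IsLocalization.lift_eq _ x
  have hι : ∀ x : R, ι (algebraMap R S x) = algebraMap R L x := fun x =>
    IsLocalization.lift_eq _ x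
  have hinj : ∀ x : S, ι x = 0 → x = 0 := by
    intro x hx
    obtain ⟨⟨a, m⟩, h⟩ := IsLocalization.surj M x
    have h2 := congrArg ι h
    simp only [map_mul, hx, zero_mul, hι] at h2
    have ha : a = 0 := IsFractionRing.injective R L (by rw [← h2, map_zero])
    simp only [ha, map_zero] at h
    exact ((IsLocalization.map_units S m).mul_left_eq_zero).1 h
  let G0 : Fin r → Matrix (Fin n) (Fin n) R := fun k =>
    Matrix.of fun i j => MvPolynomial.X (k, i, j)
  let G : Fin r → Matrix (Fin n) (Fin n) S := fun k => (G0 k).map (algebraMap R S)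
  have hG0 : ∀ k, (G0 k).map φ = B k := by
    intro k
    ext i j
    exact MvPolynomial.aeval_X (fun p : Fin r × Fin n × Fin n => B p.1 p.2.1 p.2.2) (k, i, j)
  have hG : ∀ k, IsUnit (G k) := by
    intro k
    rw [Matrix.isUnit_iff_isUnit_det]
    have h1 : (G k).det = algebraMap R S (G0 k).det := by
      rw [RingHom.map_det]; rfl
    have h2 : φ (G0 k).det = (B k).det := by
      rw [AlgHom.map_det, AlgHom.mapMatrix_apply, hG0]
    have h3 : (G0 k).det ∈ M := by
      change φ (G0 k).det ∈ nonZeroDivisors L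
      rw [h2]
      exact mem_nonZeroDivisors_of_ne_zero
        ((Matrix.isUnit_iff_isUnit_det _).1 (hB k)).ne_zero
    rw [h1]
    exact IsLocalization.map_units S ⟨_, h3⟩
  have e1 : B = fun k => (G k).map ψ := by
    funext k
    rw [← hG0 k]
    ext i j
    exact (hψ _).symm
  have e2 : genericMatrix F r n L = fun k => (G k).map ι := by
    funext k
    ext i j
    exact (hι _).symm
  rw [e1, substWord_map ψ G hG C hC, Matrix.isUnit_iff_isUnit_det, ← AlgHom.map_det] at hw
  rw [e2, substWord_map ι G hG C hC, Matrix.isUnit_iff_isUnit_det, ← AlgHom.map_det]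
  refine IsUnit.mk0 _ fun h => hw.ne_zero ?_
  rw [hinj _ h, map_zero]
end

section
/- Let F be a field, let c ≥ 1, let A ∈ M_c(F), and let δ ≥ 0 be a real number. Then rank(A) ≥ c·(1 − δ) if and only if there exists an invertible matrix D ∈ M_c(F) such that rank(I_c − D·A) ≤ c·δ. -/
theorem rank_add_le_aux {F : Type*} [Field F] {c : ℕ} (A B : Matrix (Fin c) (Fin c) F) :
    (A + B).rank ≤ A.rank + B.rank := by
  unfold Matrix.rank
  rw [Matrix.mulVecLin_add]
  refine le_trans (Submodule.finrank_mono ?_) (Submodule.finrank_add_le_finrank_add_finrank _ _)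
  rintro _ ⟨x, rfl⟩
  exact Submodule.add_mem_sup ⟨x, rfl⟩ ⟨x, rfl⟩

theorem exists_aux {F : Type*} [Field F] {c : ℕ} (A : Matrix (Fin c) (Fin c) F) :
    ∃ D : Matrix (Fin c) (Fin c) F, IsUnit D ∧ (1 - D * A).rank + A.rank ≤ c := by
  obtain ⟨V, U, e, hV, hU, h⟩ := Matrix.exists_rank_normal_form A
  have hE : (V * A * U) * (V * A * U) = V * A * U := by
    rw [h, Matrix.submatrix_mul_equiv, Matrix.fromBlocks_multiply]
    simp
  have hE2 : V * A * U * (V * A) = V * A := by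
    apply hU.mul_right_cancel
    simpa only [mul_assoc] using hE
  refine ⟨U * V, hU.mul hV, ?_⟩
  have hz : (1 - U * V * A) * (U * V * A) = 0 := by
    rw [sub_mul, one_mul, sub_eq_zero]
    have := congrArg (U * ·) hE2
    simp only [mul_assoc] at this ⊢
    exact this.symm
  have := Matrix.rank_add_rank_le_card_of_mul_eq_zero hz
  rw [Matrix.rank_mul_eq_right_of_isUnit_det (U * V) A
    ((Matrix.isUnit_iff_isUnit_det _).1 (hU.mul hV))] at this
  simpa using this

/-- Let `F` be a field, `c ≥ 1`, `A ∈ M_c(F)`, and `δ ≥ 0` a real number.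
Then `rank(A) ≥ c·(1 − δ)` if and only if there exists an invertible matrix `D ∈ M_c(F)`
such that `rank(I_c − D·A) ≤ c·δ`. -/
theorem statement4 {F : Type*} [Field F] {c : ℕ} (hc : 1 ≤ c)
    (A : Matrix (Fin c) (Fin c) F) (δ : ℝ) (hδ : 0 ≤ δ) :
    (c : ℝ) * (1 - δ) ≤ (A.rank : ℝ) ↔
      ∃ D : Matrix (Fin c) (Fin c) F, IsUnit D ∧
        (((1 - D * A : Matrix (Fin c) (Fin c) F).rank : ℝ) ≤ (c : ℝ) * δ) := by
  constructor
  · intro h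
    obtain ⟨D, hD, hr⟩ := exists_aux A
    refine ⟨D, hD, ?_⟩
    have : ((1 - D * A).rank : ℝ) + A.rank ≤ c := by exact_mod_cast hr
    linarith
  · rintro ⟨D, hD, hr⟩
    have h1 := rank_add_le_aux (1 - D * A) (D * A)
    rw [sub_add_cancel, Matrix.rank_one, Fintype.card_fin] at h1
    have h2 : c ≤ (1 - D * A).rank + A.rank :=
      h1.trans (Nat.add_le_add_left (Matrix.rank_mul_le_right D A) _)
    have : (c : ℝ) ≤ ((1 - D * A).rank : ℝ) + A.rank := by exact_mod_cast h2
    linarith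
end

section
/- Let F be a field, let V and W be F-vector spaces of the same finite dimension c ≥ 1, let T : V → W be a linear map, and let δ ≥ 0 be a real number. Then rank(T) ≥ c·(1 − δ) if and only if there exists an invertible (bijective) linear map S : W → V such that rank(id_V − S∘T) ≤ c·δ. -/
/-- Let `V` and `W` be `F`-vector spaces of the same finite dimension
`c ≥ 1`, let `T : V → W` be linear and `δ ≥ 0`. Then `rank(T) ≥ c·(1 − δ)` if and only if
there exists an invertible (bijective) linear map `S : W → V` such that
`rank(id_V − S∘T) ≤ c·δ`. -/
theorem statement5 {F : Type*} [Field F] {V W : Type*}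
    [AddCommGroup V] [Module F V] [AddCommGroup W] [Module F W]
    [FiniteDimensional F V] [FiniteDimensional F W]
    {c : ℕ} (hc : 1 ≤ c) (hV : Module.finrank F V = c) (hW : Module.finrank F W = c)
    (T : V →ₗ[F] W) (δ : ℝ) (hδ : 0 ≤ δ) :
    (c : ℝ) * (1 - δ) ≤ (Module.finrank F ↥(LinearMap.range T) : ℝ) ↔
      ∃ S : W ≃ₗ[F] V,
        (Module.finrank F
            ↥(LinearMap.range (LinearMap.id - S.toLinearMap ∘ₗ T)) : ℝ) ≤ (c : ℝ) * δ := by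
  have hT := LinearMap.finrank_range_add_finrank_ker T
  rw [hV] at hT
  have hT' : (Module.finrank F (LinearMap.range T) : ℝ) + Module.finrank F (LinearMap.ker T) = c := by
    exact_mod_cast hT
  constructor
  · intro h
    obtain ⟨C, hC⟩ := Submodule.exists_isCompl (LinearMap.ker T)
    let e : V ≃ₗ[F] W := LinearEquiv.ofFinrankEq V W (hV.trans hW.symm)
    let f : C →ₗ[F] V := (e.symm.toLinearMap ∘ₗ T) ∘ₗ C.subtype
    have hf : Function.Injective f := by
      rw [← LinearMap.ker_eq_bot, LinearMap.ker_eq_bot']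
      intro x hx
      have h1 : T x = 0 := by simpa [f] using hx
      have h2 : (x : V) ∈ LinearMap.ker T ⊓ C := ⟨h1, x.2⟩
      rw [hC.inf_eq_bot] at h2
      exact Subtype.ext (by simpa using h2)
    obtain ⟨g, hg⟩ := Submodule.exists_linearEquiv_restrict_eq (LinearEquiv.ofInjective f hf)
    refine ⟨e.symm.trans g.symm, ?_⟩
    have hle : C ≤ LinearMap.ker (LinearMap.id - (e.symm.trans g.symm).toLinearMap ∘ₗ T) := by
      intro x hx
      have h1 : g x = e.symm (T x) := by
        have := hg ⟨x, hx⟩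
        simpa [f] using this.symm
      simp [← h1]
    have h1 := Submodule.finrank_mono hle
    have h2 := LinearMap.finrank_range_add_finrank_ker
      (LinearMap.id - (e.symm.trans g.symm).toLinearMap ∘ₗ T)
    have h3 := Submodule.finrank_add_eq_of_isCompl hC
    have h4 : Module.finrank F (LinearMap.range
        (LinearMap.id - (e.symm.trans g.symm).toLinearMap ∘ₗ T))
        ≤ Module.finrank F (LinearMap.ker T) := by omega
    have h5 : (Module.finrank F (LinearMap.range
        (LinearMap.id - (e.symm.trans g.symm).toLinearMap ∘ₗ T)) : ℝ)
        ≤ Module.finrank F (LinearMap.ker T) := by exact_mod_cast h4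
    linarith
  · rintro ⟨S, hS⟩
    have hle : LinearMap.ker T ≤ LinearMap.range (LinearMap.id - S.toLinearMap ∘ₗ T) := by
      intro x hx
      have hx' : T x = 0 := hx
      exact ⟨x, by simp [hx']⟩
    have h1 : (Module.finrank F (LinearMap.ker T) : ℝ) ≤ Module.finrank F
        (LinearMap.range (LinearMap.id - S.toLinearMap ∘ₗ T)) := by
      exact_mod_cast Submodule.finrank_mono hle
    linarith
end

section
/- Let G be a group, T a set, and let g ∈ G and t ∈ T. Then the element g·t·g·t^{-1} of the free product G ∗ F_T is sufficiently generic. -/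
/-- An element `x` of the free product `G ∗ F_T` (of a group `G` with the free group on a
set `T`) is *sufficiently generic* if for every field `L` containing `ℂ`, every `n ≥ 1` and
every group homomorphism `ρ : G ∗ F_T → GL_n(L)` such that (a) each `ρ(h)`, for `h ∈ G`, is
the identity matrix or the permutation matrix of a derangement, and (b) the family of all
entries of the matrices `ρ(t')`, `t' ∈ T`, is algebraically independent over `ℂ`, the
matrix `ρ(x) − I_n` is invertible or zero. -/
def SufficientlyGeneric (G : Type*) [Group G] (T : Type*)
    (x : Monoid.Coprod G (FreeGroup T)) : Prop :=
  ∀ (L : Type*) [Field L] [Algebra ℂ L] (n : ℕ), 1 ≤ n →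
    ∀ ρ : Monoid.Coprod G (FreeGroup T) →* Matrix.GeneralLinearGroup (Fin n) L,
      (∀ h : G, ((ρ (Monoid.Coprod.inl h) : Matrix (Fin n) (Fin n) L) = 1 ∨
        ∃ σ : Equiv.Perm (Fin n), (∀ i, σ i ≠ i) ∧
          (ρ (Monoid.Coprod.inl h) : Matrix (Fin n) (Fin n) L) = permMatrix L σ)) →
      AlgebraicIndependent ℂ
        (fun p : T × Fin n × Fin n =>
          (ρ (Monoid.Coprod.inr (FreeGroup.of p.1)) : Matrix (Fin n) (Fin n) L) p.2.1 p.2.2) →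
      (IsUnit ((ρ x : Matrix (Fin n) (Fin n) L) - 1) ∨
        ((ρ x : Matrix (Fin n) (Fin n) L) - 1 = 0))

theorem aux_pm_mul {n : ℕ} (R : Type*) [CommRing R] (σ τ : Equiv.Perm (Fin n)) :
    permMatrix R σ * permMatrix R τ = permMatrix R (σ * τ) := by
  ext i j
  simp [permMatrix, Matrix.mul_apply]
  try congr

theorem aux_pm_one {n : ℕ} (R : Type*) [CommRing R] :
    permMatrix R (1 : Equiv.Perm (Fin n)) = 1 := by
  ext i j
  simp [permMatrix, Matrix.one_apply]
  try congr

theorem aux_pm_map {n : ℕ} {R S : Type*} [CommRing R] [CommRing S] (f : R →+* S)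
    (σ : Equiv.Perm (Fin n)) : f.mapMatrix (permMatrix R σ) = permMatrix S σ := by
  ext i j
  simp [permMatrix, apply_ite f]

theorem aux_diag {n : ℕ} (R : Type*) [CommRing R] (σ : Equiv.Perm (Fin n)) (d : Fin n → R) :
    Matrix.diagonal d * permMatrix R σ = permMatrix R σ * Matrix.diagonal (d ∘ σ) := by
  ext i j
  simp only [Matrix.diagonal_mul, Matrix.mul_diagonal, permMatrix, Matrix.of_apply,
    Function.comp]
  split_ifs with h
  · simp [h]
  · simp

theorem aux_det_ne {n : ℕ} (τ : Equiv.Perm (Fin n)) : (permMatrix ℂ τ).det ≠ 0 := by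
  intro h
  have := congrArg Matrix.det (aux_pm_mul ℂ τ τ⁻¹)
  rw [mul_inv_cancel, aux_pm_one, Matrix.det_mul, h] at this
  simp at this

theorem aux_exists {n : ℕ} (σ : Equiv.Perm (Fin n)) (hσ : ∀ i, σ i ≠ i) :
    ∃ A : Matrix (Fin n) (Fin n) ℂ,
      (permMatrix ℂ σ * A * permMatrix ℂ σ - A).det ≠ 0 := by
  have hc : IsConj σ σ⁻¹ := by
    rw [Equiv.Perm.isConj_iff_cycleType_eq, Equiv.Perm.cycleType_inv]
  obtain ⟨τ, hτ⟩ := isConj_iff.1 hc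
  have h1 : σ * τ * σ = τ := by
    have : τ * σ = σ⁻¹ * τ := by rw [← hτ]; group
    rw [mul_assoc, this]; group
  let w : Fin n → ℂ := fun i => ((i : ℕ) : ℂ)
  refine ⟨permMatrix ℂ τ * Matrix.diagonal w, ?_⟩
  have h2 : permMatrix ℂ σ * (permMatrix ℂ τ * Matrix.diagonal w) * permMatrix ℂ σ
      - permMatrix ℂ τ * Matrix.diagonal w
      = permMatrix ℂ τ * Matrix.diagonal (fun i => w (σ i) - w i) := by
    rw [mul_assoc, mul_assoc, aux_diag, ← mul_assoc (permMatrix ℂ τ), ← mul_assoc,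
      aux_pm_mul, aux_pm_mul, ← mul_assoc, h1, ← mul_sub, Matrix.diagonal_sub]
    rfl
  rw [h2, Matrix.det_mul, Matrix.det_diagonal]
  refine mul_ne_zero (aux_det_ne τ) (Finset.prod_ne_zero_iff.2 fun i _ => ?_)
  rw [sub_ne_zero]
  intro h
  exact hσ i (Fin.ext (Nat.cast_injective h))

theorem aux_generic {T L : Type*} [Field L] [Algebra ℂ L] {n : ℕ}
    (A : T → Matrix (Fin n) (Fin n) L)
    (hA : AlgebraicIndependent ℂ (fun p : T × Fin n × Fin n => A p.1 p.2.1 p.2.2)) (t : T)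
    (σ : Equiv.Perm (Fin n)) (hσ : ∀ i, σ i ≠ i) :
    (permMatrix L σ * A t * permMatrix L σ - A t).det ≠ 0 := by
  obtain ⟨B, hB⟩ := aux_exists σ hσ
  let X : Matrix (Fin n) (Fin n) (MvPolynomial (T × Fin n × Fin n) ℂ) :=
    Matrix.of fun i j => MvPolynomial.X (t, i, j)
  let P := permMatrix (MvPolynomial (T × Fin n × Fin n) ℂ) σ
  have hq : (P * X * P - X).det ≠ 0 := by
    intro h0
    apply hB
    have := RingHom.map_det (MvPolynomial.eval fun p : T × Fin n × Fin n => B p.2.1 p.2.2)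
      (P * X * P - X)
    rw [h0, map_zero, map_sub, map_mul, map_mul, aux_pm_map] at this
    rw [this]
    have e : (MvPolynomial.eval fun p : T × Fin n × Fin n => B p.2.1 p.2.2).mapMatrix X = B := by
      ext i j; simp [X]
    rw [e]
  intro h0
  apply hq
  apply hA
  rw [map_zero]
  have := RingHom.map_det (MvPolynomial.aeval (R := ℂ)
    fun p : T × Fin n × Fin n => A p.1 p.2.1 p.2.2).toRingHom (P * X * P - X)
  rw [map_sub, map_mul, map_mul, aux_pm_map] at this
  have e : (MvPolynomial.aeval (R := ℂ)
    fun p : T × Fin n × Fin n => A p.1 p.2.1 p.2.2).toRingHom.mapMatrix X = A t := by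
      ext i j; simp [X]
  rw [e, h0] at this
  exact this

/-- The element `g·t·g·t⁻¹` of the free product `G ∗ F_T` is sufficiently
generic. -/
theorem statement8 {G : Type*} [Group G] {T : Type*} (g : G) (t : T) :
    SufficientlyGeneric G T
      (Monoid.Coprod.inl g * Monoid.Coprod.inr (FreeGroup.of t) *
        Monoid.Coprod.inl g * (Monoid.Coprod.inr (FreeGroup.of t))⁻¹) := by
  intro L _ _ n hn ρ ha hb
  rcases ha g with h | ⟨σ, hσ, h⟩
  · right
    have h' : ρ (Monoid.Coprod.inl g) = 1 := Units.ext h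
    simp only [map_mul, h', map_inv]
    simp
  · left
    have hd := aux_generic (fun t' => (ρ (Monoid.Coprod.inr (FreeGroup.of t')) :
      Matrix (Fin n) (Fin n) L)) hb t σ hσ
    rw [← h] at hd
    have hu := ((Matrix.isUnit_iff_isUnit_det _).2 (isUnit_iff_ne_zero.2 hd)).mul
      (ρ (Monoid.Coprod.inr (FreeGroup.of t)))⁻¹.isUnit
    rw [sub_mul, Units.mul_inv] at hu
    simpa only [map_mul, map_inv, Units.val_mul] using hu
end

section
/- Let G be a group, T a set, and let g, g' ∈ G and t ∈ T. Then the commutator [g, t·g'] = g·(t·g')·g^{-1}·(t·g')^{-1}, as an element of the free product G ∗ F_T, is sufficiently generic. -/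
open Matrix in
lemma aux_generic_s10 {L : Type*} [Field L] [Algebra ℂ L] {n : ℕ} (X : Matrix (Fin n) (Fin n) L)
    (hX : AlgebraicIndependent ℂ (fun p : Fin n × Fin n => X p.1 p.2))
    (A B X0 : Matrix (Fin n) (Fin n) ℂ) (h0 : (A * (X0 * B) - X0 * B * A).det ≠ 0) :
    (A.map (algebraMap ℂ L) * (X * B.map (algebraMap ℂ L))
      - X * B.map (algebraMap ℂ L) * A.map (algebraMap ℂ L)).det ≠ 0 := by
  let M : Matrix (Fin n) (Fin n) (MvPolynomial (Fin n × Fin n) ℂ) := mvPolynomialX (Fin n) (Fin n) ℂ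
  let c := algebraMap ℂ (MvPolynomial (Fin n × Fin n) ℂ)
  let P := (A.map c * (M * B.map c) - M * B.map c * A.map c).det
  have key : ∀ (K : Type _) [Field K] [Algebra ℂ K] (Y : Matrix (Fin n) (Fin n) K),
      MvPolynomial.aeval (fun p : Fin n × Fin n => Y p.1 p.2) P =
      (A.map (algebraMap ℂ K) * (Y * B.map (algebraMap ℂ K))
      - Y * B.map (algebraMap ℂ K) * A.map (algebraMap ℂ K)).det := by
    intro K _ _ Y
    have e1 : ∀ Z : Matrix (Fin n) (Fin n) ℂ, (Z.map c).map
        (MvPolynomial.aeval (R := ℂ) (fun p : Fin n × Fin n => Y p.1 p.2))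
        = Z.map (algebraMap ℂ K) := by
      intro Z; ext i j; simp [c]
    have e2 : M.map (MvPolynomial.aeval (R := ℂ) (fun p : Fin n × Fin n => Y p.1 p.2)) = Y := by
      ext i j; simp [M]
    simp only [P]
    rw [AlgHom.map_det]
    simp only [map_sub, map_mul, AlgHom.mapMatrix_apply, e1, e2]
  have hP : P ≠ 0 := by
    intro h
    have e1 : ∀ Z : Matrix (Fin n) (Fin n) ℂ, (Z.map c).map
        (MvPolynomial.aeval (R := ℂ) (fun p : Fin n × Fin n => X0 p.1 p.2)) = Z := by
      intro Z; ext i j; simp [c]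
    have e2 : M.map (MvPolynomial.aeval (R := ℂ) (fun p : Fin n × Fin n => X0 p.1 p.2)) = X0 := by
      ext i j; simp [M]
    apply h0
    have := congrArg (MvPolynomial.aeval (R := ℂ) (fun p : Fin n × Fin n => X0 p.1 p.2)) h
    simp only [P] at this
    rw [AlgHom.map_det] at this
    simpa only [map_sub, map_mul, AlgHom.mapMatrix_apply, e1, e2, map_zero] using this
  rw [← key L X]
  intro h
  exact hP ((injective_iff_map_eq_zero _).1 hX P h)

lemma aux_permMatrix_map (L : Type*) [Field L] [Algebra ℂ L] {n : ℕ} (σ : Equiv.Perm (Fin n)) :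
    (permMatrix ℂ σ).map (algebraMap ℂ L) = permMatrix L σ := by
  ext i j
  simp only [permMatrix, Matrix.map_apply, Matrix.of_apply]
  split_ifs <;> simp

lemma aux_permMatrix_inv {n : ℕ} (σ : Equiv.Perm (Fin n)) :
    permMatrix ℂ σ⁻¹ * permMatrix ℂ σ = 1 := by
  ext i j
  simp [permMatrix, Matrix.mul_apply, Matrix.one_apply]

lemma aux_permMatrix_one (L : Type*) [Field L] {n : ℕ} :
    permMatrix L (1 : Equiv.Perm (Fin n)) = 1 := by
  ext i j
  simp only [permMatrix, Matrix.one_apply, Matrix.of_apply]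
  rfl

lemma aux_det {n : ℕ} (σ : Equiv.Perm (Fin n)) (hσ : ∀ i, σ i ≠ i) :
    (permMatrix ℂ σ * Matrix.diagonal (fun i : Fin n => ((i : ℕ) : ℂ))
      - Matrix.diagonal (fun i : Fin n => ((i : ℕ) : ℂ)) * permMatrix ℂ σ).det ≠ 0 := by
  have h : permMatrix ℂ σ * Matrix.diagonal (fun i : Fin n => ((i : ℕ) : ℂ))
      - Matrix.diagonal (fun i : Fin n => ((i : ℕ) : ℂ)) * permMatrix ℂ σ
      = permMatrix ℂ σ * Matrix.diagonal (fun i : Fin n => ((i : ℕ) : ℂ) - ((σ i : ℕ) : ℂ)) := by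
    ext i j
    simp only [Matrix.sub_apply, Matrix.mul_diagonal, Matrix.diagonal_mul, permMatrix,
      Matrix.of_apply]
    split_ifs with h
    · subst h; ring
    · ring
  rw [h, Matrix.det_mul, Matrix.det_diagonal]
  refine mul_ne_zero ?_ (Finset.prod_ne_zero_iff.2 fun i _ => ?_)
  · intro h0
    have := congrArg Matrix.det (aux_permMatrix_inv σ)
    simp [h0] at this
  · intro h0
    apply hσ i
    have : ((i : ℕ) : ℂ) = ((σ i : ℕ) : ℂ) := sub_eq_zero.1 h0
    exact Fin.ext (by exact_mod_cast this.symm)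

/-- The commutator `[g, t·g'] = g·(t·g')·g⁻¹·(t·g')⁻¹` in `G ∗ F_T` is
sufficiently generic. -/
theorem statement10 {G : Type*} [Group G] {T : Type*} (g g' : G) (t : T) :
    SufficientlyGeneric G T
      (Monoid.Coprod.inl g * (Monoid.Coprod.inr (FreeGroup.of t) * Monoid.Coprod.inl g') *
        (Monoid.Coprod.inl g)⁻¹ *
        (Monoid.Coprod.inr (FreeGroup.of t) * Monoid.Coprod.inl g')⁻¹) := by
  intro L _ _ n hn ρ ha hb
  set a := ρ (Monoid.Coprod.inl g) with hadef
  set b := ρ (Monoid.Coprod.inl g') with hbdef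
  set x := ρ (Monoid.Coprod.inr (FreeGroup.of t)) with hxdef
  have hρ : ρ (Monoid.Coprod.inl g * (Monoid.Coprod.inr (FreeGroup.of t) * Monoid.Coprod.inl g') *
        (Monoid.Coprod.inl g)⁻¹ *
        (Monoid.Coprod.inr (FreeGroup.of t) * Monoid.Coprod.inl g')⁻¹)
        = a * (x * b) * a⁻¹ * (x * b)⁻¹ := by
    simp only [map_mul, map_inv, hadef, hbdef, hxdef]
  rw [hρ]
  have hB : ∃ τ : Equiv.Perm (Fin n), (b : Matrix (Fin n) (Fin n) L) = permMatrix L τ := by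
    rcases ha g' with h | ⟨τ, -, h⟩
    · exact ⟨1, by rw [aux_permMatrix_one]; exact h⟩
    · exact ⟨τ, h⟩
  obtain ⟨τ, hτ⟩ := hB
  rcases ha g with h | ⟨σ, hσ, h⟩
  · right
    have h1 : a = 1 := Units.ext h
    rw [h1]
    simp
  · left
    have h' : (a : Matrix (Fin n) (Fin n) L) = permMatrix L σ := h
    have hX : AlgebraicIndependent ℂ
        (fun p : Fin n × Fin n => (x : Matrix (Fin n) (Fin n) L) p.1 p.2) :=
      hb.comp (fun p : Fin n × Fin n => (t, p)) (fun p q hpq => (Prod.ext_iff.1 hpq).2)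
    have hgen := aux_generic_s10 (x : Matrix (Fin n) (Fin n) L) hX (permMatrix ℂ σ) (permMatrix ℂ τ)
      (Matrix.diagonal (fun i : Fin n => ((i : ℕ) : ℂ)) * permMatrix ℂ τ⁻¹) (by
        rw [Matrix.mul_assoc _ (permMatrix ℂ τ⁻¹), aux_permMatrix_inv, Matrix.mul_one]
        exact aux_det σ hσ)
    rw [aux_permMatrix_map, aux_permMatrix_map, ← hτ, ← h'] at hgen
    have hu := (Matrix.isUnit_iff_isUnit_det _).2 (isUnit_iff_ne_zero.2 hgen)
    have e : ((a * (x * b) * a⁻¹ * (x * b)⁻¹ : Matrix.GeneralLinearGroup (Fin n) L) :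
        Matrix (Fin n) (Fin n) L) - 1
        = ((a : Matrix (Fin n) (Fin n) L) * ((x : Matrix (Fin n) (Fin n) L) * b) - x * b * a)
          * ((a⁻¹ * (x * b)⁻¹ : Matrix.GeneralLinearGroup (Fin n) L) :
            Matrix (Fin n) (Fin n) L) := by
      have e3 : (1 : Matrix (Fin n) (Fin n) L)
          = ((x * b * a * (a⁻¹ * (x * b)⁻¹) : Matrix.GeneralLinearGroup (Fin n) L) :
            Matrix (Fin n) (Fin n) L) := by
        rw [show x * b * a * (a⁻¹ * (x * b)⁻¹) = 1 by group]; rfl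
      conv_lhs => rw [e3]
      rw [mul_assoc (a * (x * b)) a⁻¹, Matrix.sub_mul]
      simp only [Units.val_mul]
    rw [e]
    exact hu.mul (Units.isUnit _)
end

section
/- Let M be a simple matroid with rank function r on a finite ground set E, let F be a field, let c ≥ 1, let V be a finite-dimensional F-vector space, let {W_e}_{e∈E} be F-vector spaces with dim W_e = c for every e, and let T_e : V → W_e be linear maps. For S ⊆ E let T_S : V → ⊕_{e∈S} W_e denote the joint map v ↦ (T_e v)_{e∈S}. Then the following are equivalent: (i) for every independent set A ⊆ E, rank(T_A) = c·|A|, and for every circuit C of M and every x ∈ C there exists a linear map S : ⊕_{e∈C∖{x}} W_e → W_x with T_x = S ∘ T_{C∖{x}}; (ii) rank(T_S) = c·r(S) for every S ⊆ E. -/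
/-- The joint map `T_S : V → ⊕_{e∈S} W_e`, `v ↦ (T_e v)_{e∈S}`. -/
def jointMap {F : Type*} [Field F] {α : Type*} {V : Type*} [AddCommGroup V] [Module F V]
    {W : α → Type*} [∀ e, AddCommGroup (W e)] [∀ e, Module F (W e)]
    (T : ∀ e, V →ₗ[F] W e) (S : Finset α) : V →ₗ[F] ((e : ↥S) → W e.1) :=
  LinearMap.pi fun e => T e.1

theorem jm_mem_ker {F : Type*} [Field F] {α : Type*} {V : Type*} [AddCommGroup V] [Module F V]
    {W : α → Type*} [∀ e, AddCommGroup (W e)] [∀ e, Module F (W e)]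
    (T : ∀ e, V →ₗ[F] W e) (S : Finset α) (v : V) :
    v ∈ LinearMap.ker (jointMap T S) ↔ ∀ e ∈ S, T e v = 0 := by
  simp [jointMap, LinearMap.mem_ker, funext_iff]

theorem jm_factor {F V U W : Type*} [Field F] [AddCommGroup V] [Module F V]
    [AddCommGroup U] [Module F U] [AddCommGroup W] [Module F W]
    (f : V →ₗ[F] U) (g : V →ₗ[F] W) (h : LinearMap.ker f ≤ LinearMap.ker g) :
    ∃ s : U →ₗ[F] W, g = s ∘ₗ f := by
  obtain ⟨s, hs⟩ := LinearMap.exists_extend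
    (((LinearMap.ker f).liftQ g h) ∘ₗ f.quotKerEquivRange.symm.toLinearMap)
  refine ⟨s, ?_⟩
  ext v
  have := congrArg (fun φ => φ ⟨f v, LinearMap.mem_range_self f v⟩) hs
  simp only [LinearMap.comp_apply, Submodule.subtype_apply] at this
  rw [LinearMap.comp_apply, this]
  have h2 : f.quotKerEquivRange.symm ⟨f v, LinearMap.mem_range_self f v⟩
      = (LinearMap.ker f).mkQ v := LinearMap.quotKerEquivRange_symm_apply_image f v _
  simp [h2]

/-- Let `M` be a simple matroid with rank function `r` on a finite ground
set, `F` a field, `c ≥ 1`, `V` a finite-dimensional `F`-vector space, `W_e` spaces of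
dimension `c` and `T_e : V → W_e` linear maps. Then: (for every independent `A`,
`rank(T_A) = c·|A|`, and for every circuit `C` and `x ∈ C` the map `T_x` factors through
`T_{C∖{x}}`) if and only if `rank(T_S) = c·r(S)` for every `S`. -/
theorem statement12 {α : Type*} [Fintype α] [DecidableEq α] {F : Type*} [Field F]
    (r : Finset α → ℕ)
    (hr_le : ∀ A : Finset α, r A ≤ A.card)
    (hr_mono : ∀ ⦃A B : Finset α⦄, A ⊆ B → r A ≤ r B)
    (hr_submod : ∀ A B : Finset α, r (A ∪ B) + r (A ∩ B) ≤ r A + r B)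
    (hsimple : ∀ A : Finset α, A.card ≤ 2 → r A = A.card)
    (c : ℕ) (hc : 1 ≤ c)
    (V : Type*) [AddCommGroup V] [Module F V] [FiniteDimensional F V]
    (W : α → Type*) [∀ e, AddCommGroup (W e)] [∀ e, Module F (W e)]
    [∀ e, FiniteDimensional F (W e)]
    (hW : ∀ e, Module.finrank F (W e) = c)
    (T : ∀ e, V →ₗ[F] W e) :
    ((∀ A : Finset α, r A = A.card →
        Module.finrank F ↥(LinearMap.range (jointMap T A)) = c * A.card) ∧
      (∀ C : Finset α, r C ≠ C.card → (∀ D ⊂ C, r D = D.card) → ∀ x ∈ C,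
        ∃ S : ((e : ↥(C.erase x)) → W e.1) →ₗ[F] W x,
          T x = S ∘ₗ jointMap T (C.erase x))) ↔
      (∀ S : Finset α, Module.finrank F ↥(LinearMap.range (jointMap T S)) = c * r S) := by
  have h0 : r ∅ = 0 := by simpa using hr_le ∅
  have hsub : ∀ D I : Finset α, D ⊆ I → r I = I.card → r D = D.card := by
    intro D I hDI hI
    have h1 := hr_submod D (I \ D)
    rw [Finset.union_sdiff_of_subset hDI, Finset.inter_sdiff_self, h0] at h1
    have h2 := hr_le (I \ D)
    have h3 := Finset.card_sdiff_add_card_eq_card hDI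
    have h4 := hr_le D
    omega
  constructor
  · rintro ⟨hind, hcirc⟩ S
    obtain ⟨I, hI, hmax⟩ := Finset.exists_max_image
      (S.powerset.filter fun I => r I = I.card) Finset.card ⟨∅, by simp [h0]⟩
    simp only [Finset.mem_filter, Finset.mem_powerset, and_imp] at hI hmax
    obtain ⟨hIS, hIr⟩ := hI
    have hdep : ∀ e ∈ S, e ∉ I → r (insert e I) ≠ (insert e I).card := by
      intro e he heI h
      have := hmax (insert e I) (Finset.insert_subset he hIS) h
      rw [Finset.card_insert_of_notMem heI] at this
      omega
    have hins : ∀ e ∈ S, r (insert e I) ≤ r I := by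
      intro e he
      by_cases heI : e ∈ I
      · rw [Finset.insert_eq_of_mem heI]
      · have h1 := hdep e he heI
        have h2 := hr_le (insert e I)
        rw [Finset.card_insert_of_notMem heI] at h1 h2
        omega
    have hK : ∀ K : Finset α, K ⊆ S → r (I ∪ K) ≤ r I := by
      intro K
      induction K using Finset.induction_on with
      | empty => simp
      | insert a K ha ih =>
        intro hKS
        have hKS' := Finset.insert_subset_iff.1 hKS
        have h1 := ih hKS'.2
        have h2 := hins a hKS'.1
        have h3 := hr_submod (I ∪ K) (insert a I)
        have h4 : (I ∪ K) ∪ insert a I = I ∪ insert a K := by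
          ext x; simp; tauto
        have h5 : I ⊆ (I ∪ K) ∩ insert a I := by
          intro x hx; simp [hx]
        have h6 := hr_mono h5
        rw [h4] at h3
        omega
    have hrS : r S = I.card := by
      have h1 := hK S subset_rfl
      rw [Finset.union_eq_right.2 hIS] at h1
      have := hr_mono hIS
      omega
    have hker : LinearMap.ker (jointMap T S) = LinearMap.ker (jointMap T I) := by
      ext v
      rw [jm_mem_ker, jm_mem_ker]
      refine ⟨fun h e he => h e (hIS he), fun h e he => ?_⟩
      by_cases heI : e ∈ I
      · exact h e heI
      · obtain ⟨C, hC, hmin⟩ := Finset.exists_min_image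
          ((insert e I).powerset.filter fun D => r D ≠ D.card) Finset.card
          ⟨insert e I, by simpa using hdep e he heI⟩
        simp only [Finset.mem_filter, Finset.mem_powerset, and_imp] at hC hmin
        obtain ⟨hCI, hCr⟩ := hC
        have heC : e ∈ C := by
          by_contra hne
          exact hCr (hsub C I ((Finset.subset_insert_iff_of_notMem hne).1 hCI) hIr)
        obtain ⟨s, hs⟩ := hcirc C hCr (by
          intro D hD
          by_contra hne
          have h1 := hmin D (hD.subset.trans hCI) hne
          have h2 := Finset.card_lt_card hD
          omega) e heC
        have hv : jointMap T (C.erase e) v = 0 := by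
          rw [← LinearMap.mem_ker, jm_mem_ker]
          intro f hf
          have hf' := Finset.mem_erase.1 hf
          exact h f (Finset.mem_of_mem_insert_of_ne (hCI hf'.2) hf'.1)
        rw [hs, LinearMap.comp_apply, hv, map_zero]
    have e1 := LinearMap.finrank_range_add_finrank_ker (jointMap T S)
    have e2 := LinearMap.finrank_range_add_finrank_ker (jointMap T I)
    rw [hker] at e1
    rw [hrS, ← hind I hIr]
    omega
  · intro h
    refine ⟨fun A hA => by rw [h, hA], fun C hC hD x hx => ?_⟩
    have hx' := hD _ (Finset.erase_ssubset hx)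
    have hcard := Finset.card_erase_add_one hx
    have hle := hr_le C
    have hmono := hr_mono (Finset.erase_subset x C)
    have hrC : r C = r (C.erase x) := by omega
    have hkle : LinearMap.ker (jointMap T C) ≤ LinearMap.ker (jointMap T (C.erase x)) := by
      intro v hv
      rw [jm_mem_ker] at hv ⊢
      exact fun e he => hv e (Finset.mem_of_mem_erase he)
    have e1 := LinearMap.finrank_range_add_finrank_ker (jointMap T C)
    have e2 := LinearMap.finrank_range_add_finrank_ker (jointMap T (C.erase x))
    rw [h] at e1 e2
    rw [hrC] at e1
    have hkeq := Submodule.eq_of_le_of_finrank_eq hkle (by omega)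
    apply jm_factor
    intro v hv
    rw [← hkeq, jm_mem_ker] at hv
    exact hv x hx
end

section
/- Let M be a simple matroid with rank function r on a finite ground set E, let F be a field, let V be a finite-dimensional F-vector space, let {W_e}_{e∈E} be F-vector spaces, let T_e : V → W_e be linear maps, and let ε ≥ 0. (a) If for some c ≥ 1 the data (c, V, {W_e}, {T_e}) form an ε-approximate vector space representation of M over F, then |rank(T_S) − c·r(S)| ≤ c·|E|·ε for every S ⊆ E, where T_S : V → ⊕_{e∈S} W_e is the joint map v ↦ (T_e v)_{e∈S}. (b) Conversely, if there exists c ≥ 1 such that dim W_e = c and rank(T_e) = c for every e ∈ E, and |rank(T_S) − c·r(S)| ≤ c·ε for every S ⊆ E, then (c, V, {W_e}, {T_e}) form a 2ε-approximate vector space representation of M over F. -/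
section helpers
open Module

theorem aux_split {F V W P : Type*} [Field F] [AddCommGroup V] [Module F V] [FiniteDimensional F V]
    [AddCommGroup W] [Module F W] [AddCommGroup P] [Module F P]
    (T : V →ₗ[F] W) (J : V →ₗ[F] P) :
    ∃ S : P →ₗ[F] W, finrank F (LinearMap.range (T - S ∘ₗ J)) +
      finrank F (LinearMap.ker J ⊓ LinearMap.ker T : Submodule F V) ≤
        finrank F (LinearMap.ker J) := by
  obtain ⟨Q, hQ⟩ := Submodule.exists_isCompl (LinearMap.ker J)
  have hinj : LinearMap.ker (J ∘ₗ Q.subtype) = ⊥ := by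
    rw [LinearMap.ker_eq_bot']
    intro m hm
    have h1 : (m : V) ∈ LinearMap.ker J ⊓ Q := ⟨by simpa using hm, m.2⟩
    rw [hQ.inf_eq_bot] at h1
    exact Subtype.ext (by simpa using h1)
  obtain ⟨L, hL⟩ := LinearMap.exists_leftInverse_of_injective _ hinj
  refine ⟨T ∘ₗ Q.subtype ∘ₗ L, ?_⟩
  have hLq : ∀ q : Q, L (J q) = q := fun q => by
    have := LinearMap.congr_fun hL q
    simpa using this
  have h1 : LinearMap.range (T - (T ∘ₗ Q.subtype ∘ₗ L) ∘ₗ J) ≤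
      LinearMap.range (T ∘ₗ (LinearMap.ker J).subtype) := by
    rintro _ ⟨v, rfl⟩
    have hv : v ∈ LinearMap.ker J ⊔ Q := by rw [hQ.sup_eq_top]; trivial
    obtain ⟨k, hk, q, hq, rfl⟩ := Submodule.mem_sup.1 hv
    have hk' : J k = 0 := hk
    have := hLq ⟨q, hq⟩
    simp only at this
    exact ⟨⟨k, hk⟩, by simp [hk', this]⟩
  have h2 := Submodule.finrank_mono h1
  have h3 := LinearMap.finrank_range_add_finrank_ker (T ∘ₗ (LinearMap.ker J).subtype)
  have h4 : finrank F (LinearMap.ker J ⊓ LinearMap.ker T : Submodule F V) ≤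
      finrank F (LinearMap.ker (T ∘ₗ (LinearMap.ker J).subtype)) := by
    have : (LinearMap.ker J ⊓ LinearMap.ker T : Submodule F V) ≤
        (LinearMap.ker (T ∘ₗ (LinearMap.ker J).subtype)).map (LinearMap.ker J).subtype := by
      rintro v ⟨hv1, hv2⟩
      exact ⟨⟨v, hv1⟩, by simpa using hv2, rfl⟩
    exact (Submodule.finrank_mono this).trans (Submodule.finrank_map_le _ _)
  omega

variable {α : Type*} {F : Type*} [Field F] {V : Type*} [AddCommGroup V] [Module F V]
  [FiniteDimensional F V] {W : α → Type*} [∀ e, AddCommGroup (W e)] [∀ e, Module F (W e)]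
  (T : ∀ e, V →ₗ[F] W e)

theorem aux_mem_ker (A : Finset α) (v : V) :
    v ∈ LinearMap.ker (jointMap T A) ↔ ∀ e ∈ A, T e v = 0 := by
  simp [jointMap, funext_iff]

theorem aux_mono {A B : Finset α} (h : A ⊆ B) :
    finrank F (LinearMap.range (jointMap T A)) ≤ finrank F (LinearMap.range (jointMap T B)) := by
  have h1 := LinearMap.finrank_range_add_finrank_ker (jointMap T A)
  have h2 := LinearMap.finrank_range_add_finrank_ker (jointMap T B)
  have h3 : LinearMap.ker (jointMap T B) ≤ LinearMap.ker (jointMap T A) := by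
    intro v
    simp only [aux_mem_ker]
    exact fun hv e he => hv e (h he)
  have := Submodule.finrank_mono h3
  omega

theorem aux_insert [DecidableEq α] {A C : Finset α} {x : α} (h : C.erase x ⊆ A)
    (S : ((e : ↥(C.erase x)) → W e.1) →ₗ[F] W x) :
    finrank F (LinearMap.range (jointMap T (insert x A))) ≤
      finrank F (LinearMap.range (jointMap T A)) +
      finrank F (LinearMap.range (T x - S ∘ₗ jointMap T (C.erase x))) := by
  have h1 := LinearMap.finrank_range_add_finrank_ker (jointMap T A)
  have h2 := LinearMap.finrank_range_add_finrank_ker (jointMap T (insert x A))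
  have h3 := LinearMap.finrank_range_add_finrank_ker (T x - S ∘ₗ jointMap T (C.erase x))
  have h4 : LinearMap.ker (jointMap T A) ⊓ LinearMap.ker (T x - S ∘ₗ jointMap T (C.erase x)) ≤
      LinearMap.ker (jointMap T (insert x A)) := by
    rintro v ⟨hv1, hv2⟩
    have hv1' := (aux_mem_ker T A v).1 hv1
    have hv3 : jointMap T (C.erase x) v = 0 :=
      (aux_mem_ker T _ v).2 fun e he => hv1' e (h he)
    have hv4 : T x v = 0 := by
      have : T x v - S (jointMap T (C.erase x) v) = 0 := hv2
      simpa [hv3] using this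
    rw [aux_mem_ker]
    intro e he
    rcases Finset.mem_insert.1 he with rfl | he
    · exact hv4
    · exact hv1' e he
  have h5 := Submodule.finrank_mono h4
  have h6 := Submodule.finrank_sup_add_finrank_inf_eq (LinearMap.ker (jointMap T A))
    (LinearMap.ker (T x - S ∘ₗ jointMap T (C.erase x)))
  have h7 := Submodule.finrank_le (LinearMap.ker (jointMap T A) ⊔
    LinearMap.ker (T x - S ∘ₗ jointMap T (C.erase x)))
  omega

theorem aux_exists_s14 [DecidableEq α] {C : Finset α} {x : α} (hx : x ∈ C) :
    ∃ S : ((e : ↥(C.erase x)) → W e.1) →ₗ[F] W x,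
      finrank F (LinearMap.range (T x - S ∘ₗ jointMap T (C.erase x))) +
      finrank F (LinearMap.range (jointMap T (C.erase x))) ≤
      finrank F (LinearMap.range (jointMap T C)) := by
  obtain ⟨S, hS⟩ := aux_split (T x) (jointMap T (C.erase x))
  refine ⟨S, ?_⟩
  have h1 := LinearMap.finrank_range_add_finrank_ker (jointMap T C)
  have h2 := LinearMap.finrank_range_add_finrank_ker (jointMap T (C.erase x))
  have h3 : LinearMap.ker (jointMap T C) ≤
      LinearMap.ker (jointMap T (C.erase x)) ⊓ LinearMap.ker (T x) := by
    intro v hv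
    rw [aux_mem_ker] at hv
    exact ⟨(aux_mem_ker T _ v).2 fun e he => hv e (Finset.mem_of_mem_erase he), hv x hx⟩
  have := Submodule.finrank_mono h3
  omega

theorem aux_card [∀ e, FiniteDimensional F (W e)] (c : ℕ) (hc : ∀ e, finrank F (W e) = c)
    (A : Finset α) : finrank F (LinearMap.range (jointMap T A)) ≤ c * A.card := by
  refine (Submodule.finrank_le _).trans ?_
  rw [finrank_pi_fintype]
  simp [hc, mul_comm]

theorem aux_basis [DecidableEq α] (r : Finset α → ℕ)
    (hr_le : ∀ A : Finset α, r A ≤ A.card)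
    (hr_mono : ∀ ⦃A B : Finset α⦄, A ⊆ B → r A ≤ r B)
    (hr_submod : ∀ A B : Finset α, r (A ∪ B) + r (A ∩ B) ≤ r A + r B) (S : Finset α) :
    ∃ B ⊆ S, r B = B.card ∧ r S = B.card ∧ ∀ x ∈ S \ B, ∃ C : Finset α, r C ≠ C.card ∧
      (∀ D ⊂ C, r D = D.card) ∧ x ∈ C ∧ C.erase x ⊆ B := by
  have hsub : ∀ A B : Finset α, A ⊆ B → r B = B.card → r A = A.card := by
    intro A B hAB hB
    have h1 := hr_submod A (B \ A)
    rw [Finset.union_sdiff_of_subset hAB] at h1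
    have h2 := hr_le (B \ A)
    have h3 := Finset.card_sdiff_add_card_eq_card hAB
    have h4 := hr_le A
    omega
  obtain ⟨B, hB, hmax⟩ := Finset.exists_max_image (S.powerset.filter fun B => r B = B.card)
    Finset.card ⟨∅, by simpa using hr_le ∅⟩
  simp only [Finset.mem_filter, Finset.mem_powerset] at hB hmax
  obtain ⟨hBS, hBi⟩ := hB
  have hdep : ∀ x ∈ S \ B, r (insert x B) ≠ (insert x B).card := by
    intro x hx h
    rw [Finset.mem_sdiff] at hx
    have := hmax (insert x B) ⟨Finset.insert_subset hx.1 hBS, h⟩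
    rw [Finset.card_insert_of_notMem hx.2] at this
    omega
  refine ⟨B, hBS, hBi, ?_, ?_⟩
  · have key : ∀ X : Finset α, X ⊆ S \ B → r (B ∪ X) = r B := by
      intro X
      induction X using Finset.induction_on with
      | empty => simp
      | insert x X hx ih =>
        intro hX
        have h1 := ih (fun y hy => hX (Finset.mem_insert_of_mem hy))
        have hxS := hX (Finset.mem_insert_self x X)
        have h2 := hdep x hxS
        have h3 := hr_le (insert x B)
        rw [Finset.card_insert_of_notMem (Finset.mem_sdiff.1 hxS).2] at h2 h3
        have h4 := hr_submod (B ∪ X) (insert x B)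
        have h5 : (B ∪ X) ∪ insert x B = B ∪ insert x X := by
          ext y; simp; tauto
        rw [h5] at h4
        have h6 : r B ≤ r ((B ∪ X) ∩ insert x B) := hr_mono (by
          intro y hy; simp [hy])
        have h7 : r B ≤ r (B ∪ insert x X) := hr_mono Finset.subset_union_left
        omega
    have := key (S \ B) subset_rfl
    rw [Finset.union_sdiff_of_subset hBS] at this
    omega
  · intro x hx
    obtain ⟨C, hC, hmin⟩ := Finset.exists_min_image
      ((insert x B).powerset.filter fun B => r B ≠ B.card) Finset.card
      ⟨insert x B, by simpa using hdep x hx⟩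
    simp only [Finset.mem_filter, Finset.mem_powerset] at hC hmin
    have hCx : C.erase x ⊆ B := by
      exact Finset.subset_insert_iff.1 hC.1
    refine ⟨C, hC.2, ?_, ?_, hCx⟩
    · intro D hD
      by_contra h
      have := hmin D ⟨hD.subset.trans hC.1, h⟩
      have := Finset.card_lt_card hD
      omega
    · by_contra h
      rw [Finset.erase_eq_of_notMem h] at hCx
      exact hC.2 (hsub C B hCx hBi)

end helpers

/-- Let `M` be a simple matroid with rank function `r` on a finite ground
set `E`, `F` a field, `V` a finite-dimensional `F`-vector space, `T_e : V → W_e` linear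
maps, and `ε ≥ 0`. (a) If for some `c ≥ 1` the data form an `ε`-approximate vector space
representation of `M`, then `|rank(T_S) − c·r(S)| ≤ c·|E|·ε` for every `S ⊆ E`.
(b) Conversely, if `dim W_e = c` and `rank(T_e) = c` for all `e`, and
`|rank(T_S) − c·r(S)| ≤ c·ε` for every `S`, then the data form a `2ε`-approximate vector
space representation of `M`. -/
theorem statement14 {α : Type*} [Fintype α] [DecidableEq α] {F : Type*} [Field F]
    (r : Finset α → ℕ)
    (hr_le : ∀ A : Finset α, r A ≤ A.card)
    (hr_mono : ∀ ⦃A B : Finset α⦄, A ⊆ B → r A ≤ r B)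
    (hr_submod : ∀ A B : Finset α, r (A ∪ B) + r (A ∩ B) ≤ r A + r B)
    (hsimple : ∀ A : Finset α, A.card ≤ 2 → r A = A.card)
    (V : Type*) [AddCommGroup V] [Module F V] [FiniteDimensional F V]
    (W : α → Type*) [∀ e, AddCommGroup (W e)] [∀ e, Module F (W e)]
    [∀ e, FiniteDimensional F (W e)]
    (T : ∀ e, V →ₗ[F] W e) (ε : ℝ) (hε : 0 ≤ ε) :
    -- (a)
    ((∀ c : ℕ, 1 ≤ c →
        (∀ e, Module.finrank F (W e) = c) →
        (∀ e, Function.Surjective (T e)) →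
        (∀ A : Finset α, r A = A.card →
          (c : ℝ) * ((A.card : ℝ) - ε) ≤
            (Module.finrank F ↥(LinearMap.range (jointMap T A)) : ℝ)) →
        (∀ C : Finset α, r C ≠ C.card → (∀ D ⊂ C, r D = D.card) → ∀ x ∈ C,
          ∃ S : ((e : ↥(C.erase x)) → W e.1) →ₗ[F] W x,
            (Module.finrank F ↥(LinearMap.range (T x - S ∘ₗ jointMap T (C.erase x))) : ℝ) ≤
              (c : ℝ) * ε) →
        ∀ S : Finset α,
          |(Module.finrank F ↥(LinearMap.range (jointMap T S)) : ℝ) - (c : ℝ) * (r S : ℝ)| ≤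
            (c : ℝ) * (Fintype.card α : ℝ) * ε)
    -- (b)
    ∧ (∀ c : ℕ, 1 ≤ c →
        (∀ e, Module.finrank F (W e) = c) →
        (∀ e, Module.finrank F ↥(LinearMap.range (T e)) = c) →
        (∀ S : Finset α,
          |(Module.finrank F ↥(LinearMap.range (jointMap T S)) : ℝ) - (c : ℝ) * (r S : ℝ)| ≤
            (c : ℝ) * ε) →
        ((∀ e, Function.Surjective (T e)) ∧
          (∀ A : Finset α, r A = A.card →
            (c : ℝ) * ((A.card : ℝ) - 2 * ε) ≤
              (Module.finrank F ↥(LinearMap.range (jointMap T A)) : ℝ)) ∧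
          (∀ C : Finset α, r C ≠ C.card → (∀ D ⊂ C, r D = D.card) → ∀ x ∈ C,
            ∃ S : ((e : ↥(C.erase x)) → W e.1) →ₗ[F] W x,
              (Module.finrank F
                  ↥(LinearMap.range (T x - S ∘ₗ jointMap T (C.erase x))) : ℝ) ≤
                (c : ℝ) * (2 * ε))))) := by
  constructor
  · intro c hc hW hT hind hcirc S
    obtain ⟨B, hBS, hBi, hrS, hB⟩ := aux_basis r hr_le hr_mono hr_submod S
    have hcε : 0 ≤ (c : ℝ) * ε := by positivity
    have hup : ∀ X : Finset α, X ⊆ S \ B →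
        (Module.finrank F ↥(LinearMap.range (jointMap T (B ∪ X))) : ℝ) ≤
          c * B.card + X.card * (c * ε) := by
      intro X
      induction X using Finset.induction_on with
      | empty =>
        intro _
        have := aux_card T c hW B
        rw [Finset.union_empty]
        have h2 : (Module.finrank F ↥(LinearMap.range (jointMap T B)) : ℝ) ≤ c * B.card := by
          exact_mod_cast this
        simpa using h2
      | insert x X hx ih =>
        intro hX
        have h1 := ih (fun y hy => hX (Finset.mem_insert_of_mem hy))
        obtain ⟨C, hC1, hC2, hxC, hCB⟩ := hB x (hX (Finset.mem_insert_self x X))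
        obtain ⟨L, hL⟩ := hcirc C hC1 hC2 x hxC
        have h2 := aux_insert T (hCB.trans (Finset.subset_union_left (s₂ := X))) L
        have h2' : (Module.finrank F ↥(LinearMap.range (jointMap T (insert x (B ∪ X)))) : ℝ) ≤
            (Module.finrank F ↥(LinearMap.range (jointMap T (B ∪ X))) : ℝ) +
            (Module.finrank F ↥(LinearMap.range (T x - L ∘ₗ jointMap T (C.erase x))) : ℝ) := by
          exact_mod_cast h2
        rw [Finset.union_insert, Finset.card_insert_of_notMem hx]
        push_cast
        linarith
    have h1 := hup (S \ B) subset_rfl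
    rw [Finset.union_sdiff_of_subset hBS] at h1
    have h2 : ((S \ B).card : ℝ) ≤ Fintype.card α := by exact_mod_cast Finset.card_le_univ _
    have h3 := mul_le_mul_of_nonneg_right h2 hcε
    have h4 : (Module.finrank F ↥(LinearMap.range (jointMap T B)) : ℝ) ≤
        Module.finrank F ↥(LinearMap.range (jointMap T S)) := by
      exact_mod_cast aux_mono T hBS
    have h5 := hind B hBi
    rw [hrS, abs_le]
    refine ⟨?_, by linarith⟩
    rcases Nat.eq_zero_or_pos (Fintype.card α) with h0 | h0
    · have hB0 : B.card = 0 := by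
        have := Finset.card_le_univ B
        omega
      rw [h0, hB0]
      simp
    · have h6 : (1 : ℝ) ≤ Fintype.card α := by exact_mod_cast h0
      have h7 := mul_le_mul_of_nonneg_right h6 hcε
      linarith
  · intro c hc hW hT hrk
    have hcε : 0 ≤ (c : ℝ) * ε := by positivity
    refine ⟨?_, ?_, ?_⟩
    · intro e
      rw [← LinearMap.range_eq_top]
      exact Submodule.eq_top_of_finrank_eq ((hT e).trans (hW e).symm)
    · intro A hA
      have h := (abs_le.1 (hrk A)).1
      rw [hA] at h
      linarith
    · intro C hC hmin x hx
      obtain ⟨S, hS⟩ := aux_exists_s14 T hx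
      refine ⟨S, ?_⟩
      have hS' : (Module.finrank F ↥(LinearMap.range (T x - S ∘ₗ jointMap T (C.erase x))) : ℝ) +
          Module.finrank F ↥(LinearMap.range (jointMap T (C.erase x))) ≤
          Module.finrank F ↥(LinearMap.range (jointMap T C)) := by exact_mod_cast hS
      have h1 := hmin _ (Finset.erase_ssubset hx)
      have h2 := Finset.card_erase_add_one hx
      have h3 := hr_mono (Finset.erase_subset x C)
      have h4 := hr_le C
      have h5 : r C = r (C.erase x) := by omega
      have h6 := (abs_le.1 (hrk C)).2
      have h7 := (abs_le.1 (hrk (C.erase x))).1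
      rw [h5] at h6
      linarith
end

section
/- Let M be a matroid with rank function r on a finite ground set E, let μ be a discrete probability measure on a set Ω (determined by its point masses μ({ω}), which sum to 1), let Ω_e be sets and X_e : Ω → Ω_e maps for e ∈ E, and suppose there is a real number λ > 0 such that r(A) = λ·H(X_A) for every A ⊆ E, where for each A ⊆ E the defining sum of H(X_A) is assumed to converge. Then the family {X_e}_{e∈E} is a discrete probability space representation of M with the determination condition holding on the support of μ; that is: (independence) for every independent set A ⊆ E and every y ∈ Π_{e∈A} Ω_e, P(X_A = y) = Π_{e∈A} P(X_e = y_e); (determination) for every circuit C of M and every x ∈ C there exists a map f : Π_{e∈C∖{x}} Ω_e → Ω_x with X_x(ω) = f((X_e(ω))_{e∈C∖{x}}) for every ω ∈ Ω with μ({ω}) > 0; (nontriviality) for every non-loop e ∈ E there exist ω, ω' ∈ Ω with μ({ω}) > 0, μ({ω'}) > 0 and X_e(ω) ≠ X_e(ω'). -/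
/-- `P(X = y)`: the total mass, under the point masses `p`, of the fiber of `X` over `y`. -/
noncomputable def prMass {Ω S : Type*} (p : Ω → ℝ) (X : Ω → S) (y : S) : ℝ :=
  ∑' ω : {w : Ω // X w = y}, p ω.1

/-- The Shannon entropy `H(X) = Σ_y −P(X = y)·ln P(X = y)` (with `0·ln 0 = 0`). -/
noncomputable def entropy {Ω S : Type*} (p : Ω → ℝ) (X : Ω → S) : ℝ :=
  ∑' y : S, Real.negMulLog (prMass p X y)

/-- The joint map `X_A : Ω → Π_{e∈A} Ω_e`, `ω ↦ (X_e(ω))_{e∈A}`. -/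
def jointRV {α Ω : Type*} {Ωe : α → Type*} (X : ∀ e, Ω → Ωe e) (A : Finset α) :
    Ω → ((e : ↥A) → Ωe e.1) :=
  fun ω e => X e.1 ω


lemma aux_summable {Ω : Type*} {p : Ω → ℝ} (hp1 : ∑' ω, p ω = 1) : Summable p := by
  by_contra h
  rw [tsum_eq_zero_of_not_summable h] at hp1
  exact zero_ne_one hp1

lemma aux_hasSum_fib {Ω S : Type*} {p : Ω → ℝ} (hp : Summable p) (X : Ω → S) (g : S → ℝ)
    (y : S) : HasSum (fun ω : {w : Ω // X w = y} => p ω.1 * g (X ω.1)) (prMass p X y * g y) := by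
  have h : Summable (fun ω : {w : Ω // X w = y} => p ω.1) :=
    hp.comp_injective Subtype.val_injective
  have h2 := h.hasSum.mul_right (g y)
  have e : (fun ω : {w : Ω // X w = y} => p ω.1 * g (X ω.1)) = fun ω => p ω.1 * g y := by
    funext ω
    rw [ω.2]
  rw [e]
  exact h2

lemma aux_nonneg {Ω S : Type*} {p : Ω → ℝ} (hp0 : ∀ ω, 0 ≤ p ω) (X : Ω → S) (y : S) :
    0 ≤ prMass p X y := tsum_nonneg fun _ => hp0 _

lemma aux_ind {Ω S : Type*} (p : Ω → ℝ) (X : Ω → S) (y : S) :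
    prMass p X y = ∑' ω, Set.indicator {w | X w = y} p ω :=
  tsum_subtype {w | X w = y} p

lemma aux_mono_s17 {Ω S T : Type*} {p : Ω → ℝ} (hp0 : ∀ ω, 0 ≤ p ω) (hp : Summable p)
    (X : Ω → S) (Y : Ω → T) (y : S) (z : T) (h : ∀ ω, X ω = y → Y ω = z) :
    prMass p X y ≤ prMass p Y z := by
  rw [aux_ind, aux_ind]
  refine (hp.indicator _).tsum_le_tsum (fun ω => ?_) (hp.indicator _)
  exact Set.indicator_le_indicator_of_subset (fun ω hω => h ω hω) hp0 ω

lemma aux_le_one {Ω S : Type*} {p : Ω → ℝ} (hp0 : ∀ ω, 0 ≤ p ω) (hp1 : ∑' ω, p ω = 1)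
    (X : Ω → S) (y : S) : prMass p X y ≤ 1 := by
  rw [aux_ind, ← hp1]
  exact ((aux_summable hp1).indicator _).tsum_le_tsum
    (fun ω => Set.indicator_le_self' (fun _ _ => hp0 _) ω) (aux_summable hp1)

lemma aux_le {Ω S : Type*} {p : Ω → ℝ} (hp0 : ∀ ω, 0 ≤ p ω) (hp : Summable p)
    (X : Ω → S) (ω : Ω) : p ω ≤ prMass p X (X ω) := by
  rw [aux_ind]
  have := (hp.indicator {w | X w = X ω}).le_tsum ω
    (fun j _ => Set.indicator_nonneg (fun _ _ => hp0 _) j)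
  simpa using this

lemma aux_hasSum {Ω S : Type*} {p : Ω → ℝ} (hp0 : ∀ ω, 0 ≤ p ω) (hp : Summable p)
    (X : Ω → S) (g : S → ℝ) (hg : ∀ y, 0 ≤ g y) (hs : Summable fun y => prMass p X y * g y) :
    HasSum (fun ω => p ω * g (X ω)) (∑' y, prMass p X y * g y) := by
  have hfib := aux_hasSum_fib hp X g
  have hsig : Summable (fun s : (Σ y : S, {w : Ω // X w = y}) => p s.2.1 * g (X s.2.1)) := by
    rw [summable_sigma_of_nonneg (fun s => mul_nonneg (hp0 _) (hg _))]
    refine ⟨fun y => (hfib y).summable, ?_⟩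
    refine hs.congr fun y => ?_
    exact ((hfib y).tsum_eq).symm
  have hS := hsig.hasSum
  have h2 := hS.sigma hfib
  rw [h2.tsum_eq]
  exact (Equiv.sigmaFiberEquiv X).hasSum_iff.mp hS

lemma aux_mass_sum {Ω S : Type*} {p : Ω → ℝ} (hp1 : ∑' ω, p ω = 1)
    (X : Ω → S) : HasSum (fun y => prMass p X y) 1 := by
  have hp := aux_summable hp1
  have hS : HasSum (fun s : (Σ y : S, {w : Ω // X w = y}) => p s.2.1) 1 :=
    (Equiv.sigmaFiberEquiv X).hasSum_iff.mpr (hp1 ▸ hp.hasSum)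
  exact hS.sigma fun y => (hp.comp_injective Subtype.val_injective).hasSum

lemma aux_ent {Ω S : Type*} {p : Ω → ℝ} (hp0 : ∀ ω, 0 ≤ p ω) (hp1 : ∑' ω, p ω = 1)
    (X : Ω → S) (hs : Summable fun y => Real.negMulLog (prMass p X y)) :
    HasSum (fun ω => p ω * -Real.log (prMass p X (X ω))) (entropy p X) := by
  have key : ∀ y, Real.negMulLog (prMass p X y) =
      prMass p X y * -Real.log (prMass p X y) := fun y => by
    simp [Real.negMulLog]
  unfold entropy
  simp only [key] at hs ⊢
  refine aux_hasSum hp0 (aux_summable hp1) X (fun y => -Real.log (prMass p X y)) (fun y => ?_) hs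
  have := Real.log_nonpos (aux_nonneg hp0 X y) (aux_le_one hp0 hp1 X y)
  linarith

lemma aux_sumQ {ι : Type*} [Fintype ι] {S : ι → Type*} (P : ∀ i, S i → ℝ)
    (h0 : ∀ i y, 0 ≤ P i y) (h1 : ∀ i, HasSum (P i) 1) :
    Summable (fun y : (∀ i, S i) => ∏ i, P i (y i)) ∧ ∑' y : (∀ i, S i), ∏ i, P i (y i) ≤ 1 := by
  classical
  have hb : ∀ F : Finset (∀ i, S i), ∑ y ∈ F, ∏ i, P i (y i) ≤ 1 := by
    intro F
    calc ∑ y ∈ F, ∏ i, P i (y i)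
        ≤ ∑ y ∈ Fintype.piFinset (fun i => F.image (fun y => y i)), ∏ i, P i (y i) := by
          refine Finset.sum_le_sum_of_subset_of_nonneg (fun y hy => ?_)
            (fun y _ _ => Finset.prod_nonneg fun i _ => h0 i _)
          rw [Fintype.mem_piFinset]
          exact fun i => Finset.mem_image_of_mem _ hy
      _ = ∏ i, ∑ z ∈ F.image (fun y => y i), P i z := (Finset.prod_univ_sum _ _).symm
      _ ≤ 1 := Finset.prod_le_one (fun i _ => Finset.sum_nonneg fun z _ => h0 i z)
          (fun i _ => sum_le_hasSum _ (fun z _ => h0 i z) (h1 i))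
  have hn : ∀ y : (∀ i, S i), 0 ≤ ∏ i, P i (y i) := fun y => Finset.prod_nonneg fun i _ => h0 i _
  have hs := summable_of_sum_le hn hb
  exact ⟨hs, hs.tsum_le_of_sum_le hb⟩

/-- Equality in subadditivity forces independence. -/
lemma aux_indep {ι Ω : Type*} [Fintype ι] {S : ι → Type*} {p : Ω → ℝ} (hp0 : ∀ ω, 0 ≤ p ω)
    (hp1 : ∑' ω, p ω = 1) (X : ∀ i, Ω → S i) (Z : Ω → ∀ i, S i) (hZ : ∀ ω i, Z ω i = X i ω)
    (H : ℝ) (h : ι → ℝ)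
    (hH : HasSum (fun ω => p ω * -Real.log (prMass p Z (Z ω))) H)
    (hh : ∀ i, HasSum (fun ω => p ω * -Real.log (prMass p (X i) (X i ω))) (h i))
    (heq : H = ∑ i, h i) (y : ∀ i, S i) :
    prMass p Z y = ∏ i, prMass p (X i) (y i) := by
  have hp := aux_summable hp1
  set P := prMass p Z with hP
  set Q : (∀ i, S i) → ℝ := fun y => ∏ i, prMass p (X i) (y i) with hQ
  have hP0 : ∀ y, 0 ≤ P y := aux_nonneg hp0 Z
  have hQ0 : ∀ y, 0 ≤ Q y := fun y => Finset.prod_nonneg fun i _ => aux_nonneg hp0 _ _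
  obtain ⟨hQs, hQ1⟩ := aux_sumQ (fun i => prMass p (X i)) (fun i => aux_nonneg hp0 _)
    (fun i => aux_mass_sum hp1 _)
  change Summable Q at hQs
  change ∑' y, Q y ≤ 1 at hQ1
  have hPg : ∀ y, P y * (Q y / P y) ≤ Q y := by
    intro y
    by_cases h : P y = 0
    · simp [h, hQ0]
    · rw [mul_div_cancel₀ _ h]
  have hPg0 : ∀ y, 0 ≤ P y * (Q y / P y) := fun y =>
    mul_nonneg (hP0 y) (div_nonneg (hQ0 y) (hP0 y))
  have hPgs : Summable (fun y => P y * (Q y / P y)) := Summable.of_nonneg_of_le hPg0 hPg hQs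
  have hle : ∑' y, P y * (Q y / P y) ≤ ∑' y, Q y := hPgs.tsum_le_tsum hPg hQs
  have h1 := aux_hasSum hp0 hp Z (fun y => Q y / P y) (fun y => div_nonneg (hQ0 y) (hP0 y)) hPgs
  have h2 : HasSum p 1 := hp1 ▸ hp.hasSum
  have h3 : HasSum (fun ω => ∑ i, p ω * -Real.log (prMass p (X i) (X i ω))) (∑ i, h i) :=
    hasSum_sum fun i _ => hh i
  have hD := ((h1.sub h2).sub hH).add h3
  have hpos : ∀ ω, 0 < p ω → 0 < P (Z ω) ∧ 0 < Q (Z ω) := by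
    intro ω hω
    refine ⟨hω.trans_le (aux_le hp0 hp Z ω), Finset.prod_pos fun i _ => ?_⟩
    rw [hZ]
    exact hω.trans_le (aux_le hp0 hp (X i) ω)
  have hform : ∀ ω, p ω * (Q (Z ω) / P (Z ω)) - p ω - p ω * -Real.log (P (Z ω))
      + ∑ i, p ω * -Real.log (prMass p (X i) (X i ω)) =
      p ω * (Q (Z ω) / P (Z ω) - 1 - Real.log (Q (Z ω) / P (Z ω))) := by
    intro ω
    rcases (hp0 ω).eq_or_lt with h | h
    · simp [← h]
    · obtain ⟨a, b⟩ := hpos ω h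
      have : Real.log (Q (Z ω)) = ∑ i, Real.log (prMass p (X i) (X i ω)) := by
        rw [hQ]
        simp only [hZ]
        exact Real.log_prod fun i _ => (h.trans_le (aux_le hp0 hp (X i) ω)).ne'
      rw [Real.log_div b.ne' a.ne', this, ← Finset.mul_sum, Finset.sum_neg_distrib]
      ring
  simp only [hform] at hD
  have hnn : ∀ ω, 0 ≤ p ω * (Q (Z ω) / P (Z ω) - 1 - Real.log (Q (Z ω) / P (Z ω))) := by
    intro ω
    rcases (hp0 ω).eq_or_lt with h | h
    · simp [← h]
    · obtain ⟨a, b⟩ := hpos ω h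
      have := Real.log_le_sub_one_of_pos (div_pos b a)
      exact mul_nonneg (hp0 ω) (by linarith)
  have hge := hD.nonneg hnn
  have hs1 : ∑' y, P y * (Q y / P y) = 1 := by linarith
  have hs2 : ∑' y, Q y = 1 := by linarith
  have hD0 : HasSum (fun ω => p ω * (Q (Z ω) / P (Z ω) - 1 - Real.log (Q (Z ω) / P (Z ω)))) 0 := by
    have hv : ∑' y, P y * (Q y / P y) - 1 - H + ∑ i, h i = 0 := by linarith
    exact hv ▸ hD
  have hz := (hasSum_zero_iff_of_nonneg hnn).1 hD0
  have hE : HasSum (fun y => Q y - P y * (Q y / P y)) 0 := by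
    have hv : ∑' y, Q y - ∑' y, P y * (Q y / P y) = 0 := by linarith
    exact hv ▸ hQs.hasSum.sub hPgs.hasSum
  have hz2 := (hasSum_zero_iff_of_nonneg (fun y => sub_nonneg.2 (hPg y))).1 hE
  have e2 : Q y - P y * (Q y / P y) = 0 := congrFun hz2 y
  change P y = Q y
  by_cases hy : P y = 0
  · rw [hy] at e2 ⊢
    linarith
  · have : ∃ ω, Z ω = y ∧ 0 < p ω := by
      by_contra hcon
      push Not at hcon
      apply hy
      rw [hP, aux_ind]
      have : ∀ ω, Set.indicator {w | Z w = y} p ω = 0 := by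
        intro ω
        apply Set.indicator_apply_eq_zero.2
        intro hm
        exact le_antisymm (hcon ω hm) (hp0 ω)
      simp [this]
    obtain ⟨ω, rfl, hω⟩ := this
    obtain ⟨a, b⟩ := hpos ω hω
    have e1 := congrFun hz ω
    simp only [Pi.zero_apply, mul_eq_zero, hω.ne', false_or] at e1
    have : Q (Z ω) / P (Z ω) = 1 := by
      by_contra hne
      have := Real.log_lt_sub_one_of_pos (div_pos b a) hne
      linarith
    rw [div_eq_one_iff_eq a.ne'] at this
    exact this.symm

lemma aux_single {α Ω : Type*} {Ωe : α → Type*} {p : Ω → ℝ}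
    (hp0 : ∀ ω, 0 ≤ p ω) (hp : Summable p) (X : ∀ e, Ω → Ωe e) (e : α) (ω : Ω) :
    prMass p (jointRV X {e}) (jointRV X {e} ω) = prMass p (X e) (X e ω) := by
  apply le_antisymm
  · refine aux_mono_s17 hp0 hp _ _ _ _ fun w hw => ?_
    exact congrFun hw ⟨e, Finset.mem_singleton_self e⟩
  · refine aux_mono_s17 hp0 hp _ _ _ _ fun w hw => ?_
    funext ⟨e', he'⟩
    obtain rfl := Finset.mem_singleton.1 he'
    exact hw

/-- Let `M` be a matroid with rank function `r` on a finite ground set,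
`μ` a discrete probability measure given by point masses `p`, `X_e : Ω → Ω_e` maps, and
`λ > 0` with `r(A) = λ·H(X_A)` for every `A` (all defining sums converging). Then the
family `{X_e}` is a discrete probability space representation of `M`, with the
determination condition holding on the support of `μ`: independence on independent sets,
determination on circuits (on the support), and nontriviality at non-loops. -/
theorem statement17 {α : Type*} [Fintype α] [DecidableEq α] (r : Finset α → ℕ)
    (hr_le : ∀ A : Finset α, r A ≤ A.card)
    (hr_mono : ∀ ⦃A B : Finset α⦄, A ⊆ B → r A ≤ r B)
    (hr_submod : ∀ A B : Finset α, r (A ∪ B) + r (A ∩ B) ≤ r A + r B)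
    {Ω : Type*} (p : Ω → ℝ) (hp0 : ∀ ω, 0 ≤ p ω) (hp1 : ∑' ω, p ω = 1)
    (Ωe : α → Type*) (X : ∀ e, Ω → Ωe e)
    (lam : ℝ) (hlam : 0 < lam)
    (hconv : ∀ A : Finset α,
      Summable fun y : (e : ↥A) → Ωe e.1 => Real.negMulLog (prMass p (jointRV X A) y))
    (hent : ∀ A : Finset α, (r A : ℝ) = lam * entropy p (jointRV X A)) :
    -- independence
    ((∀ A : Finset α, r A = A.card → ∀ y : (e : ↥A) → Ωe e.1,
        prMass p (jointRV X A) y = ∏ e : ↥A, prMass p (X e.1) (y e)) ∧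
    -- determination (on the support of μ)
      (∀ C : Finset α, r C ≠ C.card → (∀ D ⊂ C, r D = D.card) → ∀ x ∈ C,
        ∃ f : ((e : ↥(C.erase x)) → Ωe e.1) → Ωe x,
          ∀ ω, 0 < p ω → X x ω = f (jointRV X (C.erase x) ω)) ∧
    -- nontriviality
      (∀ e : α, r {e} ≠ 0 →
        ∃ ω ω', 0 < p ω ∧ 0 < p ω' ∧ X e ω ≠ X e ω')) := by
  have hp := aux_summable hp1
  have hE : ∀ A, HasSum (fun ω => p ω * -Real.log (prMass p (jointRV X A) (jointRV X A ω)))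
      (entropy p (jointRV X A)) := fun A => aux_ent hp0 hp1 _ (hconv A)
  refine ⟨?_, ?_, ?_⟩
  · intro A hA y
    have hr1 : ∀ e ∈ A, r {e} = 1 := by
      intro e he
      have h1 := hr_submod {e} (A.erase e)
      have h2 := hr_le (A.erase e)
      have h3 := hr_le {e}
      have h4 : {e} ∪ A.erase e = A := by
        rw [← Finset.insert_eq, Finset.insert_erase he]
      rw [h4] at h1
      rw [Finset.card_singleton] at h3
      have h5 := Finset.card_erase_add_one he
      omega
    refine aux_indep hp0 hp1 (fun e : ↥A => X e.1) (jointRV X A) (fun _ _ => rfl)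
      (entropy p (jointRV X A)) (fun e => entropy p (jointRV X {e.1})) (hE A) (fun e => ?_) ?_ y
    · have := hE {e.1}
      simp only [aux_single hp0 hp] at this
      exact this
    · apply mul_left_cancel₀ hlam.ne'
      rw [Finset.mul_sum, ← hent A, hA]
      simp only [← hent]
      rw [Finset.sum_congr rfl (fun e _ => by rw [hr1 e.1 e.2])]
      simp
  · intro C hC hmin x hx
    have hB := hmin _ (Finset.erase_ssubset hx)
    have hrr : r C = r (C.erase x) := by
      have h1 := hr_mono (Finset.erase_subset x C)
      have h2 := hr_le C
      have h5 := Finset.card_erase_add_one hx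
      omega
    have hee : entropy p (jointRV X C) = entropy p (jointRV X (C.erase x)) := by
      apply mul_left_cancel₀ hlam.ne'
      rw [← hent, ← hent, hrr]
    have hmono : ∀ ω, prMass p (jointRV X C) (jointRV X C ω) ≤
        prMass p (jointRV X (C.erase x)) (jointRV X (C.erase x) ω) := by
      intro ω
      refine aux_mono_s17 hp0 hp _ _ _ _ fun w hw => ?_
      funext ⟨e, he⟩
      exact congrFun hw ⟨e, Finset.mem_of_mem_erase he⟩
    have hposC : ∀ ω, 0 < p ω → 0 < prMass p (jointRV X C) (jointRV X C ω) :=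
      fun ω h => h.trans_le (aux_le hp0 hp _ ω)
    have hd := (hE C).sub (hE (C.erase x))
    rw [hee, sub_self] at hd
    have hz := (hasSum_zero_iff_of_nonneg (fun ω => by
      rcases (hp0 ω).eq_or_lt with h | h
      · simp [← h]
      · have := Real.log_le_log (hposC ω h) (hmono ω)
        have := mul_le_mul_of_nonneg_left this h.le
        linarith)).1 hd
    have heqP : ∀ ω, 0 < p ω → prMass p (jointRV X C) (jointRV X C ω) =
        prMass p (jointRV X (C.erase x)) (jointRV X (C.erase x) ω) := by
      intro ω h
      have h1 := congrFun hz ω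
      simp only [Pi.zero_apply, ← mul_sub, mul_eq_zero, h.ne', false_or] at h1
      exact Real.log_injOn_pos (hposC ω h) ((hposC ω h).trans_le (hmono ω)) (by linarith)
    have hdet : ∀ ω ω', 0 < p ω → 0 < p ω' →
        jointRV X (C.erase x) ω = jointRV X (C.erase x) ω' → X x ω = X x ω' := by
      intro ω ω' h h' hj
      by_contra hne
      have h1 := heqP ω h
      rw [aux_ind, aux_ind] at h1
      refine absurd h1 (ne_of_lt ?_)
      refine Summable.tsum_lt_tsum (i := ω') (fun w => ?_) ?_ (hp.indicator _) (hp.indicator _)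
      · refine Set.indicator_le_indicator_of_subset (fun w hw => ?_) hp0 w
        funext ⟨e, he⟩
        exact congrFun hw ⟨e, Finset.mem_of_mem_erase he⟩
      · rw [Set.indicator_of_notMem, Set.indicator_of_mem]
        · exact h'
        · exact hj.symm
        · intro hm
          exact hne (congrFun hm ⟨x, hx⟩).symm
    have hne : Nonempty Ω := by
      by_contra hcon
      rw [not_nonempty_iff] at hcon
      simp at hp1
    obtain ⟨ω0⟩ := hne
    classical
    refine ⟨fun z => if h : ∃ ω, 0 < p ω ∧ jointRV X (C.erase x) ω = z then X x h.choose
      else X x ω0, fun ω h => ?_⟩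
    have hex : ∃ w, 0 < p w ∧ jointRV X (C.erase x) w = jointRV X (C.erase x) ω := ⟨ω, h, rfl⟩
    simp only [dif_pos hex]
    exact hdet _ _ h hex.choose_spec.1 hex.choose_spec.2.symm
  · intro e he
    by_contra hcon
    push Not at hcon
    apply he
    have h0 : ∀ ω, p ω * -Real.log (prMass p (jointRV X {e}) (jointRV X {e} ω)) = 0 := by
      intro ω
      rcases (hp0 ω).eq_or_lt with h | h
      · simp [← h]
      · rw [aux_single hp0 hp, aux_ind]
        have : Set.indicator {w | X e w = X e ω} p = p := by
          rw [Set.indicator_eq_self]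
          intro w hw
          exact hcon w ω ((hp0 w).lt_of_ne' hw) h
        rw [this, hp1]
        simp
    have h1 := hE {e}
    simp only [h0] at h1
    have h2 := h1.unique hasSum_zero
    have h3 := hent {e}
    rw [h2, mul_zero] at h3
    exact_mod_cast h3
end

section
/- Let M be a connected matroid of rank at least two on a finite ground set E, and let {X_e : Ω → Ω_e}_{e∈E} together with a discrete probability measure μ on Ω be a discrete probability space representation of M. Then the variables X_e are all uniformly distributed with a common positive point mass: for all e, e' ∈ E and all a ∈ Ω_e, b ∈ Ω_{e'}, if P(X_e = a) > 0 and P(X_{e'} = b) > 0 then P(X_e = a) = P(X_{e'} = b); in particular, each X_e takes only finitely many values with positive probability. -/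
theorem aux_exists_s18 {Ω S : Type*} {p : Ω → ℝ} (hp0 : ∀ ω, 0 ≤ p ω) (X : Ω → S) (y : S)
    (h : 0 < prMass p X y) : ∃ ω, 0 < p ω ∧ X ω = y := by
  by_contra hc
  push Not at hc
  have : prMass p X y = 0 := by
    unfold prMass
    have h0 : ∀ ω : {w : Ω // X w = y}, p ω.1 = 0 := by
      intro ω
      by_contra hne
      exact hc ω.1 (lt_of_le_of_ne (hp0 _) (Ne.symm hne)) ω.2
    simp [h0]
  linarith

theorem aux_pos {Ω S : Type*} {p : Ω → ℝ} (hp0 : ∀ ω, 0 ≤ p ω) (hs : Summable p) (X : Ω → S)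
    (ω : Ω) (h : 0 < p ω) : 0 < prMass p X (X ω) := by
  have hs' : Summable (fun w : {w : Ω // X w = X ω} => p w.1) :=
    hs.comp_injective Subtype.val_injective
  exact hs'.tsum_pos (fun w => hp0 _) ⟨ω, rfl⟩ h

theorem aux_congr {Ω S T : Type*} (p : Ω → ℝ) (X : Ω → S) (Y : Ω → T) (x : S) (y : T)
    (h : ∀ ω, X ω = x ↔ Y ω = y) : prMass p X x = prMass p Y y := by
  unfold prMass
  exact (Equiv.subtypeEquivRight h).tsum_eq (fun w : {w : Ω // Y w = y} => p w.1)

theorem aux_summable_s18 {Ω S : Type*} {p : Ω → ℝ} (hs : Summable p) (X : Ω → S) :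
    Summable (fun y => prMass p X y) :=
  (hs.hasSum.tsum_fiberwise X).summable

/-- Let `M` be a connected matroid of rank at least two on a finite ground
set, and let `{X_e}` together with a discrete probability measure (point masses `p`) be a
discrete probability space representation of `M`. Then the variables `X_e` are all
uniformly distributed with a common positive point mass: any two values taken with positive
probability (by any two of the variables) have equal probability; in particular each `X_e`
takes only finitely many values with positive probability. -/
theorem statement18 {α : Type*} [Fintype α] [DecidableEq α] (r : Finset α → ℕ)
    (hr_le : ∀ A : Finset α, r A ≤ A.card)
    (hr_mono : ∀ ⦃A B : Finset α⦄, A ⊆ B → r A ≤ r B)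
    (hr_submod : ∀ A B : Finset α, r (A ∪ B) + r (A ∩ B) ≤ r A + r B)
    -- connected: every two distinct elements lie in a common circuit
    (hconn : ∀ e e' : α, e ≠ e' → ∃ C : Finset α,
      (r C ≠ C.card ∧ ∀ D ⊂ C, r D = D.card) ∧ e ∈ C ∧ e' ∈ C)
    -- rank at least two
    (hrk : 2 ≤ r Finset.univ)
    {Ω : Type*} (p : Ω → ℝ) (hp0 : ∀ ω, 0 ≤ p ω) (hp1 : ∑' ω, p ω = 1)
    (Ωe : α → Type*) (X : ∀ e, Ω → Ωe e)
    -- independence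
    (hindep : ∀ A : Finset α, r A = A.card → ∀ y : (e : ↥A) → Ωe e.1,
      prMass p (jointRV X A) y = ∏ e : ↥A, prMass p (X e.1) (y e))
    -- determination
    (hdet : ∀ C : Finset α, r C ≠ C.card → (∀ D ⊂ C, r D = D.card) → ∀ x ∈ C,
      ∃ f : ((e : ↥(C.erase x)) → Ωe e.1) → Ωe x,
        ∀ ω, X x ω = f (jointRV X (C.erase x) ω))
    -- nontriviality
    (hnontriv : ∀ e : α, r {e} ≠ 0 →
      ∃ ω ω', 0 < p ω ∧ 0 < p ω' ∧ X e ω ≠ X e ω') :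
    (∀ (e e' : α) (a : Ωe e) (b : Ωe e'),
        0 < prMass p (X e) a → 0 < prMass p (X e') b →
          prMass p (X e) a = prMass p (X e') b) ∧
      (∀ e : α, {a : Ωe e | 0 < prMass p (X e) a}.Finite) := by
  classical
  have hs : Summable p := by
    by_contra hn
    rw [tsum_eq_zero_of_not_summable hn] at hp1
    exact zero_ne_one hp1
  have hpt : ∃ ω, 0 < p ω := by
    by_contra hc
    push Not at hc
    have h0 : ∀ ω, p ω = 0 := fun ω => le_antisymm (hc ω) (hp0 ω)
    simp [h0] at hp1
  obtain ⟨ωs, hωs⟩ := hpt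
  have hex : ∀ e : α, ∃ e', e' ≠ e := by
    intro e
    by_contra hc
    push Not at hc
    have h1 : (Finset.univ : Finset α) ⊆ {e} := by
      intro x _
      simp [hc x]
    have h2 := (hr_mono h1).trans (hr_le {e})
    simp at h2
    omega
  have hr1 : ∀ e : α, r {e} = 1 := by
    intro e
    obtain ⟨e', he'⟩ := hex e
    obtain ⟨C, ⟨_, hC⟩, heC, heC'⟩ := hconn e e' he'.symm
    have := hC {e} (by
      refine Finset.ssubset_iff_subset_ne.2 ⟨by simpa using heC, ?_⟩
      rintro rfl
      simp at heC'
      exact he' heC')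
    simpa using this
  have hg : ∀ e : α, ∃ g, 2 ≤ r {e, g} := by
    intro e
    by_contra hc
    push Not at hc
    have hall : ∀ S : Finset α, r (insert e S) ≤ 1 := by
      intro S
      induction S using Finset.induction_on with
      | empty => simp [hr1]
      | insert g S hgS ih =>
        have h1 := hr_submod (insert e S) {e, g}
        have h2 : r {e} ≤ r (insert e S ∩ {e, g}) := hr_mono (by simp)
        have h3 : r (insert e (insert g S)) ≤ r (insert e S ∪ {e, g}) := hr_mono (by
          intro x hx
          simp at hx ⊢
          tauto)
        have h4 := hc g
        have h5 := hr1 e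
        omega
    have h6 := hall Finset.univ
    rw [Finset.insert_eq_of_mem (Finset.mem_univ e)] at h6
    omega
  have key : ∀ (x y : α), 2 ≤ r {x, y} → ∀ (a : Ωe x) (b : Ωe y),
      0 < prMass p (X x) a → 0 < prMass p (X y) b →
        prMass p (X x) a = prMass p (X y) b := by
    intro x y hxy a b ha hb
    have hne : x ≠ y := by
      rintro rfl
      have := hr1 x
      simp at hxy
      omega
    have hcard : ({x, y} : Finset α).card = 2 := Finset.card_pair hne
    have hI : r {x, y} = ({x, y} : Finset α).card :=
      le_antisymm (hr_le _) (by omega)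
    obtain ⟨ω₁, h1, rfl⟩ := aux_exists_s18 hp0 _ _ ha
    obtain ⟨ω₂, h2, rfl⟩ := aux_exists_s18 hp0 _ _ hb
    have hprod := hindep {x, y} hI (fun e => if e.1 = x then X e.1 ω₁ else X e.1 ω₂)
    have hpos : 0 < prMass p (jointRV X {x, y})
        (fun e => if e.1 = x then X e.1 ω₁ else X e.1 ω₂) := by
      rw [hprod]
      refine Finset.prod_pos fun e _ => ?_
      split_ifs
      · exact aux_pos hp0 hs _ _ h1
      · exact aux_pos hp0 hs _ _ h2
    obtain ⟨ω, hω, hωe⟩ := aux_exists_s18 hp0 _ _ hpos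
    have hx : X x ω = X x ω₁ := by
      have := congrFun hωe ⟨x, by simp⟩
      simpa [jointRV] using this
    have hy : X y ω = X y ω₂ := by
      have := congrFun hωe ⟨y, by simp⟩
      simpa [jointRV, hne.symm] using this
    rw [← hx, ← hy]
    obtain ⟨C, ⟨hC1, hC2⟩, hxC, hyC⟩ := hconn x y hne
    have hind : ∀ z ∈ C, prMass p (jointRV X (C.erase z)) (jointRV X (C.erase z) ω) =
        ∏ e ∈ C.erase z, prMass p (X e) (X e ω) := by
      intro z hz
      rw [hindep _ (hC2 _ (Finset.erase_ssubset hz))]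
      exact Finset.prod_coe_sort (C.erase z) (fun e => prMass p (X e) (X e ω))
    have hiff : ∀ z ∈ C, ∀ w, jointRV X (C.erase z) w = jointRV X (C.erase z) ω ↔
        ∀ e ∈ C, X e w = X e ω := by
      intro z hz w
      constructor
      · intro h e he
        by_cases hez : e = z
        · subst hez
          obtain ⟨f, hf⟩ := hdet C hC1 hC2 e he
          rw [hf w, hf ω, h]
        · exact congrFun h ⟨e, Finset.mem_erase.2 ⟨hez, he⟩⟩
      · intro h
        funext e
        exact h e.1 (Finset.mem_of_mem_erase e.2)
    have heq := aux_congr p (jointRV X (C.erase x)) (jointRV X (C.erase y))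
      (jointRV X (C.erase x) ω) (jointRV X (C.erase y) ω)
      (fun w => (hiff x hxC w).trans (hiff y hyC w).symm)
    rw [hind x hxC, hind y hyC,
      ← Finset.mul_prod_erase (C.erase x) _ (Finset.mem_erase.2 ⟨hne.symm, hyC⟩),
      ← Finset.mul_prod_erase (C.erase y) _ (Finset.mem_erase.2 ⟨hne, hxC⟩),
      Finset.erase_right_comm] at heq
    have hnz : (0:ℝ) < ∏ e ∈ (C.erase y).erase x, prMass p (X e) (X e ω) :=
      Finset.prod_pos fun e _ => aux_pos hp0 hs _ _ hω
    exact (mul_right_cancel₀ hnz.ne' heq).symm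
  have main : ∀ (e e' : α) (a : Ωe e) (b : Ωe e'),
        0 < prMass p (X e) a → 0 < prMass p (X e') b →
          prMass p (X e) a = prMass p (X e') b := by
    intro e e' a b ha hb
    by_cases h : 2 ≤ r {e, e'}
    · exact key e e' h a b ha hb
    · obtain ⟨g, hg⟩ := hg e
      have h' : 2 ≤ r {e', g} := by
        have h1 := hr_submod {e, e'} {e', g}
        have h2 : r {e'} ≤ r ({e, e'} ∩ {e', g}) := hr_mono (by simp)
        have h3 : r {e, g} ≤ r ({e, e'} ∪ {e', g}) := hr_mono (by
          intro x hx
          simp at hx ⊢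
          tauto)
        have := hr1 e'
        omega
      have hc := aux_pos hp0 hs (X g) ωs hωs
      exact (key e g hg a _ ha hc).trans (key e' g h' b _ hb hc).symm
  refine ⟨main, fun e => ?_⟩
  have hc := aux_pos hp0 hs (X e) ωs hωs
  have ht := (aux_summable_s18 hs (X e)).tendsto_cofinite_zero.eventually (gt_mem_nhds hc)
  rw [Filter.eventually_cofinite] at ht
  refine ht.subset ?_
  intro a ha
  exact not_lt.2 (main e e _ _ hc ha).le
end
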